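/- arXiv:2107.05299 — 6 statements merged into one kernel-verified Lean document; each statement's English description precedes it below -/
import Mathlib

section
/- Let κ > 0 and define φ₀ : ℝ⁶ → ℝ by φ₀(x) = √κ · (1 + |x|²/24)⁻². Then φ₀ is smooth, positive and radial, and satisfies −Δφ₀ = κ^{-1/2} φ₀² on ℝ⁶. Consequently the pair (φ, ψ) = (φ₀, φ₀/√κ) satisfies the ground-state system −Δφ = φ·ψ and −κ·Δψ = φ² on ℝ⁶. -/
open MeasureTheory Real Filter

noncomputable section

/-- Six-dimensional Euclidean space. -/
abbrev E6 := EuclideanSpace ℝ (Fin 6)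

/-- Partial derivative of a complex-valued function in the `j`-th coordinate direction. -/
def pd (f : E6 → ℂ) (j : Fin 6) (x : E6) : ℂ := fderiv ℝ f x (EuclideanSpace.single j 1)

/-- Laplacian of a complex-valued function on `ℝ⁶`. -/
def lap (f : E6 → ℂ) (x : E6) : ℂ :=
  ∑ j : Fin 6, fderiv ℝ (fun y => pd f j y) x (EuclideanSpace.single j 1)

/-- Partial derivative of a real-valued function in the `j`-th coordinate direction. -/
def pdR (f : E6 → ℝ) (j : Fin 6) (x : E6) : ℝ := fderiv ℝ f x (EuclideanSpace.single j 1)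

/-- Laplacian of a real-valued function on `ℝ⁶`. -/
def lapR (f : E6 → ℝ) (x : E6) : ℝ :=
  ∑ j : Fin 6, fderiv ℝ (fun y => pdR f j y) x (EuclideanSpace.single j 1)

/-- `|∇f(x)|²`, the squared length of the gradient. -/
def gradNormSq (f : E6 → ℂ) (x : E6) : ℝ := ∑ j : Fin 6, ‖pd f j x‖ ^ 2

/-- Kinetic energy `H(u,v) = ∫|∇u|² + (κ/2)∫|∇v|²`. -/
def Hen (κ : ℝ) (u v : E6 → ℂ) : ℝ :=
  (∫ x : E6, gradNormSq u x) + (κ / 2) * ∫ x : E6, gradNormSq v x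

/-- Potential energy `R(u,v) = Re ∫ conj(v) u²`. -/
def Ren (u v : E6 → ℂ) : ℝ := (∫ x : E6, (starRingEnd ℂ) (v x) * (u x) ^ 2).re

/-- Energy `E(u,v) = H(u,v) − R(u,v)`. -/
def Een (κ : ℝ) (u v : E6 → ℂ) : ℝ := Hen κ u v - Ren u v

/-- Mass `M(u,v) = ∫|u|² + ∫|v|²`. -/
def Mass (u v : E6 → ℂ) : ℝ := (∫ x : E6, ‖u x‖ ^ 2) + ∫ x : E6, ‖v x‖ ^ 2

/-- `j`-th component of the momentum `P(u,v) = Im ∫ (conj(u)∇u + (1/2)conj(v)∇v)`. -/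
def Pmom (u v : E6 → ℂ) (j : Fin 6) : ℝ :=
  (∫ x : E6, (starRingEnd ℂ) (u x) * pd u j x
    + (1 / 2 : ℂ) * (starRingEnd ℂ) (v x) * pd v j x).im

/-- The explicit profile `φ₀(x) = √κ (1 + |x|²/24)⁻²`. -/
def phi0 (κ : ℝ) (x : E6) : ℝ := Real.sqrt κ * ((1 + ‖x‖ ^ 2 / 24) ^ 2)⁻¹

/-- First component of the ground state `W`. -/
def W1 (κ : ℝ) (x : E6) : ℂ := (phi0 κ x : ℂ)

/-- Second component of the ground state `W`, namely `φ₀/√κ`. -/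
def W2 (κ : ℝ) (x : E6) : ℂ := ((phi0 κ x / Real.sqrt κ : ℝ) : ℂ)

/-- A function is Schwartz: smooth with all seminorms `sup ‖x‖^k ‖D^n f‖` finite. -/
def IsSchwartz (f : E6 → ℂ) : Prop :=
  ContDiff ℝ (⊤ : ℕ∞) f ∧ ∀ k n : ℕ, ∃ C : ℝ, ∀ x : E6, ‖x‖ ^ k * ‖iteratedFDeriv ℝ n f x‖ ≤ C

/-- A classical solution of the quadratic NLS system
`i∂ₜu + Δu + v conj(u) = 0`, `i∂ₜv + κΔv + u² = 0` on a time set `I`,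
with Schwartz slices whose seminorms are bounded locally uniformly in `t`. -/
structure IsClassicalSol (κ : ℝ) (I : Set ℝ) (u v : ℝ → E6 → ℂ) : Prop where
  smooth : ContDiffOn ℝ (⊤ : ℕ∞) (fun p : ℝ × E6 => (u p.1 p.2, v p.1 p.2)) (I ×ˢ Set.univ)
  eqn_u : ∀ t ∈ I, ∀ x : E6,
    Complex.I * deriv (fun s => u s x) t + lap (u t) x
      + v t x * (starRingEnd ℂ) (u t x) = 0
  eqn_v : ∀ t ∈ I, ∀ x : E6,
    Complex.I * deriv (fun s => v s x) t + (κ : ℂ) * lap (v t) x + (u t x) ^ 2 = 0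
  schwartz_u : ∀ t ∈ I, IsSchwartz (u t)
  schwartz_v : ∀ t ∈ I, IsSchwartz (v t)
  bounds : ∀ K : Set ℝ, K ⊆ I → IsCompact K → ∀ k n : ℕ, ∃ C : ℝ, ∀ t ∈ K, ∀ x : E6,
    ‖x‖ ^ k * ‖iteratedFDeriv ℝ n (u t) x‖ ≤ C ∧ ‖x‖ ^ k * ‖iteratedFDeriv ℝ n (v t) x‖ ≤ C

lemma hasFDerivAt_u (x : E6) :
    HasFDerivAt (fun y : E6 => 1 + ‖y‖ ^ 2 / 24) ((1 / 12 : ℝ) • innerSL ℝ x) x := by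
  have h := ((hasStrictFDerivAt_norm_sq x).hasFDerivAt.mul_const (1 / 24 : ℝ)).const_add 1
  have e : (fun y : E6 => 1 + ‖y‖ ^ 2 / 24) = fun y : E6 => 1 + ‖y‖ ^ 2 * (1 / 24) := by
    funext y; ring
  rw [e]
  refine h.congr_fderiv ?_
  ext v
  simp
  ring

lemma u_pos (x : E6) : 0 < 1 + ‖x‖ ^ 2 / 24 := by positivity

lemma hasFDerivAt_upow (n : ℕ) (x : E6) :
    HasFDerivAt (fun y : E6 => ((1 + ‖y‖ ^ 2 / 24) ^ n)⁻¹)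
      ((-((n : ℝ) * ((1 + ‖x‖ ^ 2 / 24) ^ (n + 1))⁻¹)) • ((1 / 12 : ℝ) • innerSL ℝ x)) x := by
  have hp := u_pos x
  have h1 : HasDerivAt (fun t : ℝ => (t ^ n)⁻¹) (-((n : ℝ) * ((1 + ‖x‖ ^ 2 / 24) ^ (n + 1))⁻¹))
      (1 + ‖x‖ ^ 2 / 24) := by
    refine ((hasDerivAt_pow n (1 + ‖x‖ ^ 2 / 24)).fun_inv (by positivity)).congr_deriv ?_
    rcases n with _ | n
    · simp
    · field_simp
      simp
      try ring
  have h2 := h1.comp_hasFDerivAt x (hasFDerivAt_u x)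
  exact h2

lemma pdR_g (c : ℝ) (j : Fin 6) (x : E6) :
    pdR (fun y : E6 => c * ((1 + ‖y‖ ^ 2 / 24) ^ 2)⁻¹) j x
      = (-(c / 6)) * (x j * ((1 + ‖x‖ ^ 2 / 24) ^ 3)⁻¹) := by
  unfold pdR
  rw [((hasFDerivAt_upow 2 x).const_mul c).fderiv]
  simp [EuclideanSpace.inner_single_right]
  ring

lemma lapR_g (c : ℝ) (x : E6) :
    lapR (fun y : E6 => c * ((1 + ‖y‖ ^ 2 / 24) ^ 2)⁻¹) x
      = - (c * ((1 + ‖x‖ ^ 2 / 24) ^ 4)⁻¹) := by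
  have hp := u_pos x
  have key : ∀ j : Fin 6, fderiv ℝ (fun y => pdR (fun y : E6 => c * ((1 + ‖y‖ ^ 2 / 24) ^ 2)⁻¹) j y)
      x (EuclideanSpace.single j 1) = -(c / 6) * ((1 + ‖x‖ ^ 2 / 24) ^ 3)⁻¹
        + c / 24 * ((1 + ‖x‖ ^ 2 / 24) ^ 4)⁻¹ * (x j) ^ 2 := by
    intro j
    simp only [pdR_g]
    have hj : HasFDerivAt (fun y : E6 => y j) (EuclideanSpace.proj j : E6 →L[ℝ] ℝ) x :=
      (EuclideanSpace.proj j : E6 →L[ℝ] ℝ).hasFDerivAt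
    rw [((hj.fun_mul (hasFDerivAt_upow 3 x)).const_mul (-(c / 6))).fderiv]
    simp [EuclideanSpace.inner_single_right]
    ring
  unfold lapR
  rw [Finset.sum_congr rfl (fun j _ => key j), Finset.sum_add_distrib, ← Finset.mul_sum, ← Finset.mul_sum,
    ← EuclideanSpace.real_norm_sq_eq]
  simp
  field_simp
  ring

/-- the explicit function `φ₀(x) = √κ (1 + |x|²/24)⁻²` is smooth, positive
and radial, satisfies `−Δφ₀ = κ^{-1/2} φ₀²`, and the pair `(φ₀, φ₀/√κ)` solves the
ground-state system `−Δφ = φψ`, `−κΔψ = φ²` on `ℝ⁶`. -/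
theorem explicit_ground_state (κ : ℝ) (hκ : 0 < κ) :
    ContDiff ℝ (⊤ : ℕ∞) (phi0 κ) ∧
    (∀ x : E6, 0 < phi0 κ x) ∧
    (∀ x y : E6, ‖x‖ = ‖y‖ → phi0 κ x = phi0 κ y) ∧
    (∀ x : E6, - lapR (phi0 κ) x = (Real.sqrt κ)⁻¹ * (phi0 κ x) ^ 2) ∧
    (∀ x : E6, - lapR (phi0 κ) x = phi0 κ x * (phi0 κ x / Real.sqrt κ)) ∧
    (∀ x : E6, - (κ * lapR (fun y => phi0 κ y / Real.sqrt κ) x) = (phi0 κ x) ^ 2) := by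
  have hs : 0 < Real.sqrt κ := Real.sqrt_pos.2 hκ
  have hsq : Real.sqrt κ ^ 2 = κ := Real.sq_sqrt hκ.le
  have e0 : phi0 κ = fun y : E6 => Real.sqrt κ * ((1 + ‖y‖ ^ 2 / 24) ^ 2)⁻¹ := rfl
  have e1 : (fun y => phi0 κ y / Real.sqrt κ)
      = fun y : E6 => (1 : ℝ) * ((1 + ‖y‖ ^ 2 / 24) ^ 2)⁻¹ := by
    funext y
    simp only [phi0]
    field_simp
  refine ⟨?_, ?_, ?_, ?_, ?_, ?_⟩
  · rw [e0]
    refine contDiff_const.mul (ContDiff.inv ?_ fun x => (pow_pos (u_pos x) 2).ne')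
    exact (contDiff_const.add ((contDiff_norm_sq ℝ).div_const 24)).pow 2
  · intro x
    have := u_pos x
    unfold phi0
    positivity
  · intro x y h
    simp only [phi0, h]
  · intro x
    have := u_pos x
    rw [e0, lapR_g]
    field_simp
  · intro x
    have := u_pos x
    rw [e0, lapR_g]
    field_simp
  · intro x
    have := u_pos x
    rw [e1, lapR_g]
    simp only [phi0, mul_pow, hsq]
    field_simp
end
end

section
/- For every κ > 0, the explicit ground state W = (φ₀, φ₀/√κ), φ₀(x) = √κ(1 + |x|²/24)⁻², satisfies the Pohozaev-type identity H(W) = (3/2)·R(W); consequently E(W) = (1/3)·H(W). Moreover H(W) > 0 and R(W) > 0. -/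
open MeasureTheory Real Filter

noncomputable section

lemma my_int (n : ℕ) (hn : n ≤ 1) : Integrable (fun x : E6 => (‖x‖ ^ 2) ^ n * ((1 + ‖x‖ ^ 2 / 24) ^ 6)⁻¹) := by
  have h := integrable_rpow_neg_one_add_norm_sq (E := E6) (μ := volume) (r := 10) (by simp; norm_num)
  refine (h.const_mul (24 ^ 6)).mono' ?_ ?_
  · apply Continuous.aestronglyMeasurable
    have : ∀ x : E6, (1 + ‖x‖ ^ 2 / 24) ^ 6 ≠ 0 := fun x => by positivity
    fun_prop (disch := assumption)
  · refine Eventually.of_forall fun x => ?_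
    rw [Real.norm_of_nonneg (by positivity)]
    have e : (1 + ‖x‖ ^ 2) ^ (-(10:ℝ) / 2) = ((1 + ‖x‖ ^ 2) ^ 5)⁻¹ := by
      rw [← Real.rpow_natCast (1 + ‖x‖ ^ 2) 5, ← Real.rpow_neg (by positivity)]
      norm_num
    rw [e]
    generalize ht : ‖x‖ ^ 2 = t
    have t0 : 0 ≤ t := by rw [← ht]; positivity
    have h1 : t ^ n ≤ 1 + t := by
      interval_cases n
      · simp [t0]
      · simp
    have h2 : (1 + t) ^ 6 / 24 ^ 6 ≤ (1 + t / 24) ^ 6 := by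
      rw [← div_pow]
      gcongr
      linarith
    calc t ^ n * ((1 + t / 24) ^ 6)⁻¹ ≤ (1 + t) * ((1 + t) ^ 6 / 24 ^ 6)⁻¹ := by gcongr
      _ = _ := by field_simp

lemma my_cancel : ∫ x : E6, (36 - ‖x‖ ^ 2) * ((1 + ‖x‖ ^ 2 / 24) ^ 6)⁻¹ = 0 := by
  have hi : Integrable (fun x : E6 => (36 - ‖x‖ ^ 2) * ((1 + ‖x‖ ^ 2 / 24) ^ 6)⁻¹) := by
    have := ((my_int 0 (by norm_num)).const_mul 36).sub (my_int 1 le_rfl)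
    refine this.congr (Eventually.of_forall fun x => ?_)
    simp
    ring
  have h1 := integral_fun_norm_addHaar (volume : Measure E6)
    (fun r : ℝ => (36 - r ^ 2) * ((1 + r ^ 2 / 24) ^ 6)⁻¹)
  have h2 := (integrable_fun_norm_addHaar (volume : Measure E6)
    (f := fun r : ℝ => (36 - r ^ 2) * ((1 + r ^ 2 / 24) ^ 6)⁻¹)).1 hi
  rw [h1]
  have h3 := integral_Ioi_of_hasDerivAt_of_tendsto (a := 0) (m := 0)
    (f := fun r : ℝ => 6 * r ^ 6 * ((1 + r ^ 2 / 24) ^ 5)⁻¹)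
    (f' := fun r : ℝ => r ^ (Module.finrank ℝ E6 - 1) • ((36 - r ^ 2) * ((1 + r ^ 2 / 24) ^ 6)⁻¹))
    ?_ ?_ h2 ?_
  · rw [h3]; simp
  · apply Continuous.continuousWithinAt
    have : ∀ r : ℝ, (1 + r ^ 2 / 24) ^ 5 ≠ 0 := fun x => by positivity
    fun_prop (disch := assumption)
  · intro r _
    have hq : HasDerivAt (fun r : ℝ => (1 + r ^ 2 / 24) ^ 5) _ r :=
      ((((hasDerivAt_id r).pow 2).div_const 24).const_add 1).pow 5
    have hq0 : (1 + r ^ 2 / 24) ^ 5 ≠ 0 := by positivity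
    have hd := (((hasDerivAt_id r).pow 6).const_mul 6).mul (hq.inv hq0)
    refine hd.congr_deriv ?_
    have : 1 + r ^ 2 / 24 ≠ 0 := by positivity
    simp
    field_simp
    ring
  · have : Tendsto (fun r : ℝ => 6 * 24 ^ 5 * (r ^ 4)⁻¹) atTop (nhds 0) := by
      have := (tendsto_pow_atTop (α := ℝ) (n := 4) (by norm_num)).inv_tendsto_atTop.const_mul (6 * 24 ^ 5)
      simpa using this
    refine squeeze_zero' ?_ ?_ this
    · exact Eventually.of_forall fun r => by positivity
    · filter_upwards [eventually_gt_atTop 0] with r hr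
      have h5 : (r ^ 2 / 24) ^ 5 ≤ (1 + r ^ 2 / 24) ^ 5 := by
        gcongr; linarith
      calc 6 * r ^ 6 * ((1 + r ^ 2 / 24) ^ 5)⁻¹ ≤ 6 * r ^ 6 * ((r ^ 2 / 24) ^ 5)⁻¹ := by gcongr
        _ = _ := by field_simp

lemma my_pd (c : ℝ) (f : E6 → ℂ) (hf : f = fun x => ((c * ((1 + ‖x‖ ^ 2 / 24) ^ 2)⁻¹ : ℝ) : ℂ))
    (j : Fin 6) (x : E6) :
    pd f j x = ((-(c / 6) * ((1 + ‖x‖ ^ 2 / 24) ^ 3)⁻¹ * x j : ℝ) : ℂ) := by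
  subst hf
  have h1 : HasFDerivAt (fun x : E6 => ‖x‖ ^ 2) _ x := (hasStrictFDerivAt_norm_sq x).hasFDerivAt
  have hg : HasDerivAt (fun t : ℝ => c * ((1 + t / 24) ^ 2)⁻¹)
      (-(c / 12) * ((1 + ‖x‖ ^ 2 / 24) ^ 3)⁻¹) (‖x‖ ^ 2) := by
    have hq := (((hasDerivAt_id (‖x‖ ^ 2)).div_const 24).const_add 1).pow 2
    have h := (hq.inv (by simp; positivity)).const_mul c
    refine h.congr_deriv ?_
    have : 1 + ‖x‖ ^ 2 / 24 ≠ 0 := by positivity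
    simp
    field_simp
    ring
  have h2 := (hg.comp_hasFDerivAt x h1)
  have h3 := (Complex.ofRealCLM.hasFDerivAt (x := c * ((1 + ‖x‖ ^ 2 / 24) ^ 2)⁻¹)).comp x h2
  unfold pd
  rw [show (fun x : E6 => ((c * ((1 + ‖x‖ ^ 2 / 24) ^ 2)⁻¹ : ℝ) : ℂ)) =
    Complex.ofRealCLM ∘ ((fun t : ℝ => c * ((1 + t / 24) ^ 2)⁻¹) ∘ fun x : E6 => ‖x‖ ^ 2) from rfl,
    h3.fderiv]
  simp [EuclideanSpace.inner_single_right]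
  ring

lemma my_grad (c : ℝ) (f : E6 → ℂ) (hf : f = fun x => ((c * ((1 + ‖x‖ ^ 2 / 24) ^ 2)⁻¹ : ℝ) : ℂ))
    (x : E6) :
    gradNormSq f x = c ^ 2 / 36 * ((‖x‖ ^ 2) ^ 1 * ((1 + ‖x‖ ^ 2 / 24) ^ 6)⁻¹) := by
  unfold gradNormSq
  simp_rw [my_pd c f hf, Complex.norm_real, Real.norm_eq_abs, sq_abs]
  rw [pow_one]
  conv_rhs => rw [mul_comm (‖x‖ ^ 2), EuclideanSpace.real_norm_sq_eq x, ← mul_assoc, Finset.mul_sum]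
  rw [← EuclideanSpace.real_norm_sq_eq x]
  refine Finset.sum_congr rfl fun j _ => ?_
  have : 1 + ‖x‖ ^ 2 / 24 ≠ 0 := by positivity
  field_simp
  ring

/-- the explicit ground state `W = (φ₀, φ₀/√κ)` satisfies the Pohozaev-type
identity `H(W) = (3/2)R(W)`, hence `E(W) = (1/3)H(W)`; moreover `H(W) > 0` and `R(W) > 0`. -/
theorem ground_state_pohozaev (κ : ℝ) (hκ : 0 < κ) :
    Hen κ (W1 κ) (W2 κ) = (3 / 2) * Ren (W1 κ) (W2 κ) ∧
    Een κ (W1 κ) (W2 κ) = (1 / 3) * Hen κ (W1 κ) (W2 κ) ∧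
    0 < Hen κ (W1 κ) (W2 κ) ∧
    0 < Ren (W1 κ) (W2 κ) := by
  have hs : 0 < Real.sqrt κ := Real.sqrt_pos.2 hκ
  have hsq : Real.sqrt κ ^ 2 = κ := Real.sq_sqrt hκ.le
  set A := ∫ x : E6, (‖x‖ ^ 2) ^ 0 * ((1 + ‖x‖ ^ 2 / 24) ^ 6)⁻¹ with hA
  set B := ∫ x : E6, (‖x‖ ^ 2) ^ 1 * ((1 + ‖x‖ ^ 2 / 24) ^ 6)⁻¹ with hB
  have hAB : 36 * A = B := by
    have := my_cancel
    rw [hA, hB, ← sub_eq_zero, ← integral_const_mul,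
      ← integral_sub ((my_int 0 (by norm_num)).const_mul 36) (my_int 1 le_rfl), ← this]
    congr 1
    ext x
    simp
    ring
  have hApos : 0 < A := by
    refine integral_pos_of_integrable_nonneg_nonzero (x := 0) ?_ (my_int 0 (by norm_num)) ?_ ?_
    · have : ∀ x : E6, (1 + ‖x‖ ^ 2 / 24) ^ 6 ≠ 0 := fun x => by positivity
      fun_prop (disch := assumption)
    · intro x
      positivity
    · simp
  have hH : Hen κ (W1 κ) (W2 κ) = κ / 36 * B + κ / 2 * (1 / 36 * B) := by
    unfold Hen
    simp_rw [my_grad (Real.sqrt κ) (W1 κ) rfl, my_grad 1 (W2 κ) (by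
      ext x
      unfold W2 phi0
      congr 1
      field_simp), integral_const_mul, hsq]
    norm_num [hB]
  have hR : Ren (W1 κ) (W2 κ) = κ * A := by
    unfold Ren
    have : ∀ x : E6, (starRingEnd ℂ) (W2 κ x) * (W1 κ x) ^ 2 =
        ((κ * ((‖x‖ ^ 2) ^ 0 * ((1 + ‖x‖ ^ 2 / 24) ^ 6)⁻¹) : ℝ) : ℂ) := by
      intro x
      unfold W1 W2
      rw [Complex.conj_ofReal, ← Complex.ofReal_pow, ← Complex.ofReal_mul]
      congr 1
      unfold phi0
      have : 1 + ‖x‖ ^ 2 / 24 ≠ 0 := by positivity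
      conv_rhs => rw [← hsq]
      field_simp
    simp_rw [this]
    rw [integral_complex_ofReal, Complex.ofReal_re, integral_const_mul]
  have hRpos : 0 < Ren (W1 κ) (W2 κ) := by rw [hR]; positivity
  have hHR : Hen κ (W1 κ) (W2 κ) = (3 / 2) * Ren (W1 κ) (W2 κ) := by
    rw [hH, hR, ← hAB]; ring
  refine ⟨hHR, ?_, ?_, hRpos⟩
  · unfold Een
    rw [hHR]; ring
  · rw [hHR]; positivity
end
end

section
/- Let d ≥ 1. A set F ⊆ L²(ℝ^d; ℂ) has compact closure in L²(ℝ^d) if and only if the following two conditions hold: (i) there exists A > 0 such that ‖f‖_{L²} ≤ A for all f ∈ F; and (ii) for every ε > 0 there exists R = R(ε) > 0 such that ∫_{|x| ≥ R} |f(x)|² dx + ∫_{|ξ| ≥ R} |f̂(ξ)|² dξ < ε for all f ∈ F. -/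
open MeasureTheory Real

noncomputable section

namespace CL2

abbrev Sp (d : ℕ) := EuclideanSpace ℝ (Fin d)
abbrev L2 (d : ℕ) := Lp ℂ 2 (volume : Measure (Sp d))

variable {d : ℕ}

/-- Multiplication by the indicator of a measurable set. -/
def ind (s : Set (Sp d)) (hs : MeasurableSet s) (f : L2 d) : L2 d :=
  ((Lp.memLp f).indicator hs).toLp _

lemma ind_coe (s : Set (Sp d)) (hs : MeasurableSet s) (f : L2 d) :
    ⇑(ind s hs f) =ᵐ[volume] s.indicator f := MemLp.coeFn_toLp _

lemma sq_int (f : L2 d) : Integrable (fun x => ‖f x‖ ^ 2) :=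
  (memLp_two_iff_integrable_sq_norm (Lp.aestronglyMeasurable f)).1 (Lp.memLp f)

lemma norm_sq (f : L2 d) : ‖f‖ ^ 2 = ∫ x, ‖f x‖ ^ 2 := by
  have h := @inner_self_eq_norm_sq ℂ _ _ _ _ f
  rw [← h, L2.inner_def]
  simp only [inner_self_eq_norm_sq_to_K]
  have : (∫ a, ((‖f a‖ : ℂ)) ^ 2) = ((∫ a, ‖f a‖ ^ 2 : ℝ) : ℂ) := by
    rw [← integral_complex_ofReal]; simp
  erw [this]
  simp

lemma ind_norm_sq (s : Set (Sp d)) (hs : MeasurableSet s) (f : L2 d) :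
    ‖ind s hs f‖ ^ 2 = ∫ x in s, ‖f x‖ ^ 2 := by
  rw [norm_sq, ← integral_indicator hs]
  apply integral_congr_ae
  filter_upwards [ind_coe s hs f] with x hx
  rw [hx]
  by_cases h : x ∈ s <;> simp [h]

lemma ind_norm_le (s : Set (Sp d)) (hs : MeasurableSet s) (f : L2 d) :
    ‖ind s hs f‖ ≤ ‖f‖ := by
  apply Lp.norm_le_norm_of_ae_le
  filter_upwards [ind_coe s hs f] with x hx
  rw [hx]
  exact norm_indicator_le_norm_self _ _

lemma ind_sub (s : Set (Sp d)) (hs : MeasurableSet s) (f g : L2 d) :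
    ind s hs (f - g) = ind s hs f - ind s hs g := by
  apply Lp.ext
  filter_upwards [ind_coe s hs f, ind_coe s hs g, ind_coe s hs (f - g), Lp.coeFn_sub f g,
    Lp.coeFn_sub (ind s hs f) (ind s hs g)] with x h1 h2 h3 h4 h5
  rw [h3, h5, Pi.sub_apply, h1, h2]
  by_cases h : x ∈ s
  · rw [Set.indicator_of_mem h, Set.indicator_of_mem h, Set.indicator_of_mem h, h4, Pi.sub_apply]
  · simp [h]

lemma ind_compl (s : Set (Sp d)) (hs : MeasurableSet s) (f : L2 d) :
    ind s hs f + ind sᶜ hs.compl f = f := by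
  apply Lp.ext
  filter_upwards [ind_coe s hs f, ind_coe sᶜ hs.compl f,
    Lp.coeFn_add (ind s hs f) (ind sᶜ hs.compl f)] with x h1 h2 h5
  rw [h5, Pi.add_apply, h1, h2]
  by_cases h : x ∈ s <;> simp [h]

lemma meas_tail (R : ℝ) : MeasurableSet {x : Sp d | R ≤ ‖x‖} :=
  measurableSet_le measurable_const measurable_norm

/-- The tail operator. -/
def tl (R : ℝ) (f : L2 d) : L2 d := ind {x : Sp d | R ≤ ‖x‖} (meas_tail R) f

def hd (R : ℝ) (f : L2 d) : L2 d := ind {x : Sp d | R ≤ ‖x‖}ᶜ (meas_tail R).compl f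

lemma tail_small (f : L2 d) (η : ℝ) (hη : 0 < η) :
    ∃ N : ℝ, ∀ R, N ≤ R → ‖tl R f‖ < η := by
  have h := tendsto_setIntegral_of_antitone (μ := (volume : Measure (Sp d)))
    (f := fun x => ‖f x‖ ^ 2) (s := fun n : ℝ => {x : Sp d | n ≤ ‖x‖})
    (fun n => meas_tail n) (fun m n hmn x hx => le_trans hmn hx)
    ⟨0, (sq_int f).integrableOn⟩
  have he : (⋂ n : ℝ, {x : Sp d | n ≤ ‖x‖}) = ∅ := by
    ext x
    simp only [Set.mem_iInter, Set.mem_ofPred_eq, Set.mem_empty_iff_false, iff_false, not_forall,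
      not_le]
    exact ⟨‖x‖ + 1, by linarith⟩
  rw [he] at h
  simp only [Measure.restrict_empty, integral_zero_measure] at h
  have h2 := h.eventually (gt_mem_nhds (show (0 : ℝ) < η ^ 2 by positivity))
  obtain ⟨N, hN⟩ := Filter.eventually_atTop.1 h2
  refine ⟨N, fun R hR => ?_⟩
  have := hN R hR
  rw [← ind_norm_sq _ (meas_tail R)] at this
  exact lt_of_pow_lt_pow_left₀ 2 hη.le this

lemma tb {X : Type} [PseudoMetricSpace X] (S : Set X)
    (h : ∀ ε > 0, ∃ (ι : Type) (_ : Fintype ι) (Φ : X → ι → ℂ) (δ : ℝ) (C : ℝ), 0 < δ ∧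
      (∀ f ∈ S, ‖Φ f‖ ≤ C) ∧ ∀ f ∈ S, ∀ g ∈ S, ‖Φ f - Φ g‖ < δ → dist f g < ε) :
    TotallyBounded S := by
  apply Metric.totallyBounded_of_finite_discretization
  intro ε hε
  obtain ⟨ι, _, Φ, δ, C, hδ, hC, hΦ⟩ := h ε hε
  have hb : TotallyBounded (Metric.closedBall (0 : ι → ℂ) C) :=
    (isCompact_closedBall _ _).totallyBounded
  obtain ⟨t, ht, hcov⟩ := Metric.totallyBounded_iff.1 hb (δ / 2) (by positivity)
  have hx : ∀ x : S, ∃ y : t, dist (Φ x) y < δ / 2 := by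
    intro x
    have : Φ x ∈ Metric.closedBall (0 : ι → ℂ) C := by simpa using hC x x.2
    have := hcov this
    simp only [Set.mem_iUnion, Metric.mem_ball] at this
    obtain ⟨y, hy, h⟩ := this
    exact ⟨⟨y, hy⟩, h⟩
  choose G hG using hx
  refine ⟨t, ht.fintype, G, fun x y hxy => hΦ x x.2 y y.2 ?_⟩
  rw [← dist_eq_norm]
  have h1 := hG x
  have h2 := hG y
  rw [← hxy] at h2
  have := dist_triangle_right (Φ x) (Φ y) (G x : ι → ℂ)
  linarith

lemma ball_lt_top (R : ℝ) : (volume : Measure (Sp d)) {x : Sp d | R ≤ ‖x‖}ᶜ < ⊤ := by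
  have : {x : Sp d | R ≤ ‖x‖}ᶜ = Metric.ball 0 R := by ext; simp
  rw [this]
  exact measure_ball_lt_top

lemma int_on (R : ℝ) (f : L2 d) : IntegrableOn f {x : Sp d | R ≤ ‖x‖}ᶜ := by
  have : IsFiniteMeasure ((volume : Measure (Sp d)).restrict {x : Sp d | R ≤ ‖x‖}ᶜ) :=
    ⟨by simpa using ball_lt_top R⟩
  exact ((Lp.memLp f).restrict _).integrable (by norm_num)

lemma l1_bound (R : ℝ) : ∃ C : ℝ, 0 ≤ C ∧ ∀ f : L2 d,
    ∫ x in {x : Sp d | R ≤ ‖x‖}ᶜ, ‖f x‖ ≤ C * ‖f‖ := by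
  have : IsFiniteMeasure ((volume : Measure (Sp d)).restrict {x : Sp d | R ≤ ‖x‖}ᶜ) :=
    ⟨by simpa using ball_lt_top R⟩
  refine ⟨((volume : Measure (Sp d)).real {x : Sp d | R ≤ ‖x‖}ᶜ) ^ (1 / 2 : ℝ), by positivity,
    fun f => ?_⟩
  have h := integral_mul_norm_le_Lp_mul_Lq
    (μ := (volume : Measure (Sp d)).restrict {x : Sp d | R ≤ ‖x‖}ᶜ)
    (f := fun _ => (1 : ℂ)) (g := f) Real.HolderConjugate.two_two
    (memLp_const _) (by simpa using (Lp.memLp f).restrict _)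
  simp only [norm_one, one_mul, integral_const, smul_eq_mul,
    measureReal_restrict_apply_univ, Real.rpow_two, one_pow, mul_one] at h
  refine h.trans ?_
  gcongr
  rw [← ind_norm_sq _ (meas_tail R).compl, ← Real.sqrt_eq_rpow, Real.sqrt_sq (norm_nonneg _)]
  exact ind_norm_le _ _ _

def ker (x ξ : Sp d) : ℂ :=
  Complex.exp ((-(2 * Real.pi * ∑ j : Fin d, x j * ξ j) : ℝ) * Complex.I)

lemma ker_norm (x ξ : Sp d) : ‖ker x ξ‖ = 1 := Complex.norm_exp_ofReal_mul_I _

lemma ker_cont (ξ : Sp d) : Continuous fun x : Sp d => ker x ξ := by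
  unfold ker; fun_prop

lemma ker_lip (x ξ ζ : Sp d) : ‖ker x ξ - ker x ζ‖ ≤ 2 * π * ‖x‖ * ‖ξ - ζ‖ := by
  have hs : ∑ j : Fin d, x j * (ξ - ζ) j = inner ℝ (ξ - ζ) x := by
    simp [PiLp.inner_apply]
  have h : ker x ξ = ker x ζ *
      Complex.exp (Complex.I * ((-(2 * π * ∑ j : Fin d, x j * (ξ - ζ) j) : ℝ) : ℂ)) := by
    unfold ker
    rw [← Complex.exp_add]
    congr 1
    rw [mul_comm Complex.I, ← add_mul, ← Complex.ofReal_add]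
    congr 2
    simp only [PiLp.sub_apply, mul_sub, Finset.sum_sub_distrib]
    ring
  have h2 : ker x ξ - ker x ζ = ker x ζ *
    (Complex.exp (Complex.I * ((-(2 * π * ∑ j : Fin d, x j * (ξ - ζ) j) : ℝ) : ℂ)) - 1) := by
    rw [h]; ring
  rw [h2, norm_mul, ker_norm, one_mul]
  refine Real.norm_exp_I_mul_ofReal_sub_one_le.trans ?_
  rw [hs, norm_neg, norm_mul, Real.norm_of_nonneg (by positivity : 0 ≤ 2 * π), mul_assoc (2 * π)]
  refine mul_le_mul_of_nonneg_left ?_ (by positivity)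
  rw [mul_comm ‖x‖]
  exact norm_inner_le_norm (𝕜 := ℝ) (ξ - ζ) x

/-- Truncated Fourier integral. -/
def phi (R : ℝ) (f : L2 d) (ξ : Sp d) : ℂ := ∫ x in {x : Sp d | R ≤ ‖x‖}ᶜ, ker x ξ * f x

lemma phi_int (R : ℝ) (f : L2 d) (ξ : Sp d) :
    IntegrableOn (fun x => ker x ξ * f x) {x : Sp d | R ≤ ‖x‖}ᶜ :=
  (int_on R f).bdd_mul (c := 1) (ker_cont ξ).aestronglyMeasurable
    (Filter.Eventually.of_forall fun x => (ker_norm x ξ).le)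

lemma phi_sub (R : ℝ) (f g : L2 d) (ξ : Sp d) :
    phi R (f - g) ξ = phi R f ξ - phi R g ξ := by
  unfold phi
  rw [← integral_sub (phi_int R f ξ) (phi_int R g ξ)]
  apply integral_congr_ae
  filter_upwards [ae_restrict_of_ae (Lp.coeFn_sub f g)] with x hx
  rw [hx, Pi.sub_apply, mul_sub]

lemma phi_bound (R : ℝ) (f : L2 d) (ξ : Sp d) :
    ‖phi R f ξ‖ ≤ ∫ x in {x : Sp d | R ≤ ‖x‖}ᶜ, ‖f x‖ := by
  refine (norm_integral_le_integral_norm _).trans_eq ?_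
  simp [ker_norm]

lemma phi_lip (R : ℝ) (f : L2 d) (ξ ζ : Sp d) :
    ‖phi R f ξ - phi R f ζ‖ ≤
      2 * π * R * ‖ξ - ζ‖ * ∫ x in {x : Sp d | R ≤ ‖x‖}ᶜ, ‖f x‖ := by
  unfold phi
  rw [← integral_sub (phi_int R f ξ) (phi_int R f ζ), ← integral_const_mul]
  refine norm_integral_le_of_norm_le ((int_on R f).norm.const_mul _) ?_
  filter_upwards [ae_restrict_mem (meas_tail R).compl] with x hx
  rw [← sub_mul, norm_mul]
  have hx' : ‖x‖ < R := by simpa using hx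
  gcongr
  refine (ker_lip x ξ ζ).trans ?_
  gcongr

lemma head_bound (T : L2 d ≃ₗᵢ[ℂ] L2 d)
    (hT : ∀ f : L2 d, Integrable (⇑f) volume →
      ⇑(T f) =ᵐ[volume] fun ξ => ∫ x : Sp d, ker x ξ * f x)
    (R : ℝ) (h : L2 d) (η : ℝ) (hη : 0 ≤ η)
    (hb : ∀ ξ : Sp d, ‖ξ‖ < R → ‖phi R h ξ‖ ≤ η) :
    ‖hd R (T (hd R h))‖ ≤ η * √((volume : Measure (Sp d)).real {x : Sp d | R ≤ ‖x‖}ᶜ) := by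
  have hc := ind_coe {x : Sp d | R ≤ ‖x‖}ᶜ (meas_tail R).compl h
  have hi : Integrable (⇑(hd R h)) volume := by
    refine Integrable.congr ?_ hc.symm
    exact (integrable_indicator_iff (meas_tail R).compl).2 (int_on R h)
  have hTe : ⇑(T (hd R h)) =ᵐ[volume] phi R h := by
    refine (hT _ hi).trans (Filter.Eventually.of_forall fun ξ => ?_)
    simp only [phi]
    rw [← integral_indicator (meas_tail R).compl]
    apply integral_congr_ae
    filter_upwards [hc] with x hx
    rw [hd, hx]
    by_cases hxs : x ∈ {x : Sp d | R ≤ ‖x‖}ᶜ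
    · rw [Set.indicator_of_mem hxs, Set.indicator_of_mem hxs]
    · rw [Set.indicator_of_notMem hxs, Set.indicator_of_notMem hxs, mul_zero]
  have : ‖hd R (T (hd R h))‖ ^ 2 ≤
      η ^ 2 * (volume : Measure (Sp d)).real {x : Sp d | R ≤ ‖x‖}ᶜ := by
    rw [show ‖hd R (T (hd R h))‖ ^ 2 = _ from ind_norm_sq _ _ _]
    refine (le_abs_self _).trans ?_
    rw [← Real.norm_eq_abs]
    apply norm_setIntegral_le_of_norm_le_const_ae (ball_lt_top R)
    filter_upwards [ae_restrict_of_ae hTe, ae_restrict_mem (meas_tail R).compl] with ξ h1 h2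
    rw [h1, norm_pow, norm_norm]
    have := hb ξ (by simpa using h2)
    gcongr
  apply le_of_sq_le_sq _ (by positivity)
  rw [mul_pow, Real.sq_sqrt (by positivity)]
  exact this

end CL2

/-- compactness criterion in `L²(ℝ^d)` (Riesz–Kolmogorov via the Fourier
transform): given the unitary Fourier–Plancherel transform `T` on `L²(ℝ^d;ℂ)` (i.e. a
linear isometric equivalence agreeing a.e. with the Fourier integral on integrable
functions), a set `F ⊆ L²` has compact closure iff it is norm-bounded and has uniformly
small tails in space and frequency. -/
theorem compactness_in_L2 (d : ℕ) (hd : 1 ≤ d)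
    (T : Lp ℂ 2 (volume : Measure (EuclideanSpace ℝ (Fin d)))
          ≃ₗᵢ[ℂ] Lp ℂ 2 (volume : Measure (EuclideanSpace ℝ (Fin d))))
    (hT : ∀ f : Lp ℂ 2 (volume : Measure (EuclideanSpace ℝ (Fin d))),
      Integrable (⇑f) (volume : Measure (EuclideanSpace ℝ (Fin d))) →
      (⇑(T f) : EuclideanSpace ℝ (Fin d) → ℂ)
        =ᵐ[(volume : Measure (EuclideanSpace ℝ (Fin d)))]
          fun ξ => ∫ x : EuclideanSpace ℝ (Fin d),
            Complex.exp ((-(2 * Real.pi * ∑ j : Fin d, x j * ξ j) : ℝ) * Complex.I) * f x)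
    (F : Set (Lp ℂ 2 (volume : Measure (EuclideanSpace ℝ (Fin d))))) :
    IsCompact (closure F) ↔
      ((∃ A : ℝ, 0 < A ∧ ∀ f ∈ F, ‖f‖ ≤ A) ∧
        (∀ ε : ℝ, 0 < ε → ∃ R : ℝ, 0 < R ∧ ∀ f ∈ F,
          (∫ x in {x : EuclideanSpace ℝ (Fin d) | R ≤ ‖x‖}, ‖f x‖ ^ 2)
            + (∫ ξ in {ξ : EuclideanSpace ℝ (Fin d) | R ≤ ‖ξ‖}, ‖(T f) ξ‖ ^ 2) < ε)) := by
  have key : ∀ (R : ℝ) (f : CL2.L2 d),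
      (∫ x in {x : EuclideanSpace ℝ (Fin d) | R ≤ ‖x‖}, ‖f x‖ ^ 2) = ‖CL2.tl R f‖ ^ 2 :=
    fun R f => (CL2.ind_norm_sq _ (CL2.meas_tail R) f).symm
  simp only [key]
  constructor
  · intro hc
    have htb : TotallyBounded F := hc.totallyBounded.subset subset_closure
    constructor
    · obtain ⟨A, hA⟩ := (hc.isBounded.subset subset_closure).exists_norm_le
      exact ⟨max A 1, by positivity, fun f hf => (hA f hf).trans (le_max_left _ _)⟩
    · intro ε hε
      obtain ⟨η, hη, hηe⟩ : ∃ η : ℝ, 0 < η ∧ 8 * η ^ 2 ≤ ε :=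
        ⟨√(ε / 8), by positivity, by rw [Real.sq_sqrt (by positivity)]; linarith⟩
      obtain ⟨t, ht, hcov⟩ := Metric.totallyBounded_iff.1 htb η hη
      have h1 : ∀ y ∈ t, ∀ᶠ R in Filter.atTop, ‖CL2.tl R y‖ < η ∧ ‖CL2.tl R (T y)‖ < η := by
        intro y _
        obtain ⟨N, hN⟩ := CL2.tail_small y η hη
        obtain ⟨M, hM⟩ := CL2.tail_small (T y) η hη
        filter_upwards [Filter.eventually_ge_atTop N, Filter.eventually_ge_atTop M] with R a b
        exact ⟨hN R a, hM R b⟩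
      obtain ⟨R, hR, hR0⟩ := (((Filter.eventually_all_finite ht).2 h1).and
        (Filter.eventually_gt_atTop (0 : ℝ))).exists
      refine ⟨R, hR0, fun f hf => ?_⟩
      have := hcov hf
      simp only [Set.mem_iUnion, Metric.mem_ball] at this
      obtain ⟨y, hy, hfy⟩ := this
      have gen : ∀ a b : CL2.L2 d, ‖a - b‖ < η → ‖CL2.tl R b‖ < η → ‖CL2.tl R a‖ < 2 * η := by
        intro a b hab hb
        have e : CL2.tl R (a - b) = CL2.tl R a - CL2.tl R b := CL2.ind_sub _ _ _ _
        have e1 : ‖CL2.tl R (a - b)‖ ≤ ‖a - b‖ := CL2.ind_norm_le _ _ _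
        have e2 : CL2.tl R a = CL2.tl R (a - b) + CL2.tl R b := by rw [e]; abel
        have := norm_add_le (CL2.tl R (a - b)) (CL2.tl R b)
        rw [← e2] at this
        linarith
      rw [dist_eq_norm] at hfy
      have a1 := gen f y hfy (hR y hy).1
      have a2 := gen (T f) (T y) (by rw [← map_sub, T.norm_map]; exact hfy) (hR y hy).2
      have b1 := pow_lt_pow_left₀ a1 (norm_nonneg _) two_ne_zero
      have b2 := pow_lt_pow_left₀ a2 (norm_nonneg _) two_ne_zero
      nlinarith
  · rintro ⟨⟨A, hA, hFA⟩, htail⟩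
    refine TotallyBounded.isCompact_of_isClosed (TotallyBounded.closure ?_) isClosed_closure
    apply CL2.tb
    intro ε hε
    obtain ⟨R, hR, hFR⟩ := htail ((ε / 8) ^ 2) (by positivity)
    obtain ⟨C, hC, hL1⟩ := CL2.l1_bound (d := d) R
    set V := √((volume : Measure (CL2.Sp d)).real {x : CL2.Sp d | R ≤ ‖x‖}ᶜ) with hV
    have hV0 : 0 ≤ V := Real.sqrt_nonneg _
    obtain ⟨η, hη, hηV⟩ : ∃ η : ℝ, 0 < η ∧ η * V < ε / 2 := by
      refine ⟨ε / (2 * (V + 1)), by positivity, ?_⟩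
      rw [div_mul_eq_mul_div, div_lt_div_iff₀ (by positivity) (by positivity)]
      nlinarith
    obtain ⟨r, hr, hrη⟩ : ∃ r : ℝ, 0 < r ∧ 2 * π * R * r * (C * (2 * A)) ≤ η / 2 := by
      refine ⟨η / 2 / (2 * π * R * (C * (2 * A)) + 1), by positivity, ?_⟩
      have hK : 0 ≤ 2 * π * R * (C * (2 * A)) := by positivity
      rw [mul_right_comm]
      generalize 2 * π * R * (C * (2 * A)) = K at hK ⊢
      rw [mul_div_assoc', div_le_iff₀ (by positivity)]
      nlinarith
    obtain ⟨t, ht, hcov⟩ := Metric.totallyBounded_iff.1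
      (isCompact_closedBall (0 : CL2.Sp d) R).totallyBounded r hr
    have := ht.fintype
    refine ⟨t, this, fun f ξ => CL2.phi R f ξ, η / 2, C * A, by positivity, ?_, ?_⟩
    · intro f hf
      rw [pi_norm_le_iff_of_nonneg (by positivity)]
      intro ξ
      refine (CL2.phi_bound R f ξ).trans ((hL1 f).trans ?_)
      have := hFA f hf
      gcongr
    · intro f hf g hg hfg
      have hn : ‖f - g‖ ≤ 2 * A := by
        have := norm_sub_le f g
        linarith [hFA f hf, hFA g hg]
      have hhead := CL2.head_bound T hT R (f - g) η hη.le (by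
        intro ξ hξ
        have := hcov (show ξ ∈ Metric.closedBall 0 R by simpa using hξ.le)
        simp only [Set.mem_iUnion, Metric.mem_ball] at this
        obtain ⟨ζ, hζ, hξζ⟩ := this
        rw [dist_eq_norm] at hξζ
        have h1 : ‖CL2.phi R (f - g) ζ‖ < η / 2 := by
          rw [CL2.phi_sub]
          exact (norm_le_pi_norm (((fun ξ : t => CL2.phi R f ξ) - fun ξ : t => CL2.phi R g ξ))
            ⟨ζ, hζ⟩).trans_lt hfg
        have h2 : ‖CL2.phi R (f - g) ξ - CL2.phi R (f - g) ζ‖ ≤ η / 2 := by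
          refine (CL2.phi_lip R (f - g) ξ ζ).trans (le_trans ?_ hrη)
          have := (hL1 (f - g)).trans (mul_le_mul_of_nonneg_left hn hC)
          gcongr
        have h3 := norm_le_norm_add_norm_sub' (CL2.phi R (f - g) ξ) (CL2.phi R (f - g) ζ)
        linarith)
      rw [dist_eq_norm]
      have t1 : ∀ a ∈ F, ‖CL2.tl R a‖ < ε / 8 ∧ ‖CL2.tl R (T a)‖ < ε / 8 := by
        intro a ha
        have := hFR a ha
        have p1 := sq_nonneg ‖CL2.tl R a‖
        have p2 := sq_nonneg ‖CL2.tl R (T a)‖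
        exact ⟨lt_of_pow_lt_pow_left₀ 2 (by positivity) (by linarith),
          lt_of_pow_lt_pow_left₀ 2 (by positivity) (by linarith)⟩
      have t2 : ‖CL2.tl R (f - g)‖ < ε / 4 := by
        rw [show CL2.tl R (f - g) = CL2.tl R f - CL2.tl R g from CL2.ind_sub _ _ _ _]
        linarith [norm_sub_le (CL2.tl R f) (CL2.tl R g), (t1 f hf).1, (t1 g hg).1]
      have t3 : ‖CL2.tl R (T (f - g))‖ < ε / 4 := by
        rw [map_sub, show CL2.tl R (T f - T g) = CL2.tl R (T f) - CL2.tl R (T g) from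
          CL2.ind_sub _ _ _ _]
        linarith [norm_sub_le (CL2.tl R (T f)) (CL2.tl R (T g)), (t1 f hf).2, (t1 g hg).2]
      have split : ∀ a : CL2.L2 d, CL2.tl R a + CL2.hd R a = a := fun a =>
        CL2.ind_compl _ (CL2.meas_tail R) a
      have s1 : ‖f - g‖ ≤ ‖CL2.tl R (T (f - g))‖ + ‖CL2.hd R (T (f - g))‖ := by
        rw [← T.norm_map (f - g)]
        conv_lhs => rw [← split (T (f - g))]
        exact norm_add_le _ _
      have s2 : ‖CL2.hd R (T (f - g))‖ ≤
          ‖CL2.hd R (T (CL2.hd R (f - g)))‖ + ‖CL2.tl R (f - g)‖ := by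
        have e : CL2.hd R (T (f - g) - T (CL2.hd R (f - g))) =
          CL2.hd R (T (f - g)) - CL2.hd R (T (CL2.hd R (f - g))) := CL2.ind_sub _ _ _ _
        have e1 : T (f - g) - T (CL2.hd R (f - g)) = T (CL2.tl R (f - g)) := by
          rw [← map_sub]
          congr 1
          rw [sub_eq_iff_eq_add]
          exact (split _).symm
        have e2 : ‖CL2.hd R (T (CL2.tl R (f - g)))‖ ≤ ‖T (CL2.tl R (f - g))‖ :=
          CL2.ind_norm_le _ _ _
        rw [T.norm_map, ← e1, e] at e2
        have := norm_le_norm_add_norm_sub' (CL2.hd R (T (f - g)))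
          (CL2.hd R (T (CL2.hd R (f - g))))
        linarith
      linarith
end
end

section
/- Let κ = 1/2 and let (u, v) be a classical solution of the quadratic NLS system on an open interval I. Let a ∈ C^∞(ℝ⁶; ℝ) be such that a and all its derivatives grow at most polynomially. Then for all t ∈ I, (d/dt) ∫_{ℝ⁶} (|u(t,x)|² + |v(t,x)|²) a(x) dx = Im ∫_{ℝ⁶} (2·conj(u)∇u + conj(v)∇v)·∇a(x) dx. -/
open MeasureTheory Real Filter

noncomputable section

/-- Continuous and rapidly decreasing. -/
def RapDec (f : E6 → ℂ) : Prop :=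
  Continuous f ∧ ∀ k : ℕ, ∃ C : ℝ, ∀ x : E6, (1 + ‖x‖) ^ k * ‖f x‖ ≤ C

/-- Continuous and polynomially bounded. -/
def PolyB (f : E6 → ℂ) : Prop :=
  Continuous f ∧ ∃ k : ℕ, ∃ C : ℝ, ∀ x : E6, ‖f x‖ ≤ C * (1 + ‖x‖) ^ k

lemma integrable_bd : Integrable (fun x : E6 => ((1 + ‖x‖) ^ 7)⁻¹) := by
  have h := integrable_one_add_norm (E := E6) (μ := volume) (r := 7) (by simp; norm_num)
  refine h.congr (Eventually.of_forall fun x => ?_)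
  have : (0:ℝ) ≤ 1 + ‖x‖ := by positivity
  simp only
  rw [Real.rpow_neg this]
  norm_cast

lemma RapDec.integrable {f : E6 → ℂ} (hf : RapDec f) : Integrable f := by
  obtain ⟨C, hC⟩ := hf.2 7
  refine (integrable_bd.const_mul C).mono' hf.1.aestronglyMeasurable
    (Eventually.of_forall fun x => ?_)
  have : (0:ℝ) < (1 + ‖x‖) ^ 7 := by positivity
  rw [← div_eq_mul_inv, le_div_iff₀ this, mul_comm]
  exact hC x

lemma RapDec.poly {f : E6 → ℂ} (hf : RapDec f) : PolyB f := by
  obtain ⟨C, hC⟩ := hf.2 0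
  exact ⟨hf.1, 0, C, fun x => by simpa using hC x⟩

lemma RapDec.mul {f g : E6 → ℂ} (hf : RapDec f) (hg : PolyB g) :
    RapDec (fun x => f x * g x) := by
  obtain ⟨hgc, l, D, hD⟩ := hg
  refine ⟨hf.1.mul hgc, fun k => ?_⟩
  obtain ⟨C, hC⟩ := hf.2 (k + l)
  have hD0 : 0 ≤ D := by
    have := (norm_nonneg _).trans (hD 0)
    simpa using this
  refine ⟨C * D, fun x => ?_⟩
  rw [norm_mul]
  calc (1 + ‖x‖) ^ k * (‖f x‖ * ‖g x‖)
      ≤ (1 + ‖x‖) ^ k * (‖f x‖ * (D * (1 + ‖x‖) ^ l)) := by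
        gcongr; exact hD x
    _ = ((1 + ‖x‖) ^ (k + l) * ‖f x‖) * D := by ring
    _ ≤ C * D := by gcongr; exact hC x

lemma RapDec.conj {f : E6 → ℂ} (hf : RapDec f) :
    RapDec (fun x => (starRingEnd ℂ) (f x)) :=
  ⟨Complex.continuous_conj.comp hf.1, fun k => by simpa using hf.2 k⟩

lemma RapDec.add {f g : E6 → ℂ} (hf : RapDec f) (hg : RapDec g) :
    RapDec (fun x => f x + g x) := by
  refine ⟨hf.1.add hg.1, fun k => ?_⟩
  obtain ⟨C, hC⟩ := hf.2 k
  obtain ⟨D, hD⟩ := hg.2 k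
  refine ⟨C + D, fun x => ?_⟩
  have : (1 + ‖x‖) ^ k * ‖f x + g x‖ ≤ (1 + ‖x‖) ^ k * (‖f x‖ + ‖g x‖) := by
    gcongr; exact norm_add_le _ _
  linarith [hC x, hD x]

lemma RapDec.sum {f : Fin 6 → E6 → ℂ} (hf : ∀ j, RapDec (f j)) :
    RapDec (fun x => ∑ j, f j x) := by
  have : ∀ s : Finset (Fin 6), RapDec (fun x => ∑ j ∈ s, f j x) := by
    intro s
    classical
    induction s using Finset.induction_on with
    | empty => exact ⟨by simpa using continuous_const, fun k => ⟨0, fun x => by simp⟩⟩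
    | insert j s hj ih =>
      simp only [Finset.sum_insert hj]
      exact (hf j).add ih
  exact this _

lemma pow_bound {k : ℕ} {r y C D : ℝ} (hr : 0 ≤ r) (hy : 0 ≤ y) (h0 : y ≤ C)
    (h1 : r ^ k * y ≤ D) : (1 + r) ^ k * y ≤ 2 ^ (k - 1) * (C + D) := by
  have h := add_pow_le (zero_le_one (α := ℝ)) hr k
  calc (1 + r) ^ k * y ≤ (2 ^ (k - 1) * (1 ^ k + r ^ k)) * y := by gcongr
    _ = 2 ^ (k - 1) * (y + r ^ k * y) := by simp; ring
    _ ≤ _ := by gcongr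

lemma norm_pd_le (f : E6 → ℂ) (j : Fin 6) (x : E6) : ‖pd f j x‖ ≤ ‖iteratedFDeriv ℝ 1 f x‖ := by
  rw [norm_iteratedFDeriv_one]
  simpa [pd] using (fderiv ℝ f x).le_opNorm (EuclideanSpace.single j 1)

lemma pdpd_eq {f : E6 → ℂ} (hf : ContDiff ℝ (⊤ : ℕ∞) f) (j : Fin 6) (x : E6) :
    fderiv ℝ (fun y => pd f j y) x (EuclideanSpace.single j 1)
      = iteratedFDeriv ℝ 2 f x ![EuclideanSpace.single j 1, EuclideanSpace.single j 1] := by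
  rw [iteratedFDeriv_two_apply]
  have hd : DifferentiableAt ℝ (fderiv ℝ f) x :=
    ((hf.fderiv_right (m := 1) (by norm_cast)).differentiable (by norm_num)) x
  unfold pd
  rw [fderiv_clm_apply hd (differentiableAt_const _)]
  simp

lemma norm_pdpd_le {f : E6 → ℂ} (hf : ContDiff ℝ (⊤ : ℕ∞) f) (j : Fin 6) (x : E6) :
    ‖fderiv ℝ (fun y => pd f j y) x (EuclideanSpace.single j 1)‖ ≤ ‖iteratedFDeriv ℝ 2 f x‖ := by
  rw [pdpd_eq hf]
  refine (ContinuousMultilinearMap.le_opNorm _ _).trans ?_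
  simp [Fin.prod_univ_two]

lemma norm_lap_le {f : E6 → ℂ} (hf : ContDiff ℝ (⊤ : ℕ∞) f) (x : E6) :
    ‖lap f x‖ ≤ 6 * ‖iteratedFDeriv ℝ 2 f x‖ := by
  unfold lap
  refine (norm_sum_le_of_le _ fun j _ => norm_pdpd_le hf j x).trans ?_
  simp

lemma contDiff_pd {f : E6 → ℂ} (hf : ContDiff ℝ (⊤ : ℕ∞) f) (j : Fin 6) :
    ContDiff ℝ (⊤ : ℕ∞) (fun x => pd f j x) := by
  unfold pd
  exact (hf.fderiv_right (m := (⊤ : ℕ∞)) (by norm_cast)).clm_apply contDiff_const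

lemma rapDec_of {f g : E6 → ℂ} (hf : IsSchwartz f) (n : ℕ) (hg : Continuous g)
    (h : ∀ x, ‖g x‖ ≤ ‖iteratedFDeriv ℝ n f x‖) : RapDec g := by
  refine ⟨hg, fun k => ?_⟩
  obtain ⟨C, hC⟩ := hf.2 0 n
  obtain ⟨D, hD⟩ := hf.2 k n
  refine ⟨2 ^ (k - 1) * (C + D), fun x => ?_⟩
  refine pow_bound (norm_nonneg _) (norm_nonneg _) ((h x).trans (by simpa using hC x)) ?_
  exact (mul_le_mul_of_nonneg_left (h x) (by positivity)).trans (hD x)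

lemma IsSchwartz.rd {f : E6 → ℂ} (hf : IsSchwartz f) : RapDec f :=
  rapDec_of hf 0 hf.1.continuous (fun x => by simp)

lemma IsSchwartz.rd_pd {f : E6 → ℂ} (hf : IsSchwartz f) (j : Fin 6) : RapDec (pd f j) :=
  rapDec_of hf 1 (contDiff_pd hf.1 j).continuous (norm_pd_le f j)

lemma IsSchwartz.rd_pdpd {f : E6 → ℂ} (hf : IsSchwartz f) (j : Fin 6) :
    RapDec (fun x => fderiv ℝ (fun y => pd f j y) x (EuclideanSpace.single j 1)) :=
  rapDec_of hf 2 (contDiff_pd (contDiff_pd hf.1 j) j).continuous (norm_pdpd_le hf.1 j)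

lemma IsSchwartz.rd_lap {f : E6 → ℂ} (hf : IsSchwartz f) : RapDec (lap f) :=
  RapDec.sum fun j => hf.rd_pdpd j

lemma polyB_a {a : E6 → ℝ} (ha : Function.HasTemperateGrowth a) :
    PolyB (fun x => ((a x : ℝ) : ℂ)) := by
  obtain ⟨k, C, h⟩ := ha.2 0
  exact ⟨Complex.continuous_ofReal.comp ha.1.continuous, k, C, fun x => by simpa using h x⟩

lemma polyB_pda {a : E6 → ℝ} (ha : Function.HasTemperateGrowth a) (j : Fin 6) :
    PolyB (fun x => ((pdR a j x : ℝ) : ℂ)) := by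
  obtain ⟨k, C, h⟩ := ha.2 1
  refine ⟨Complex.continuous_ofReal.comp ?_, k, C, fun x => ?_⟩
  · unfold pdR
    exact (ha.1.continuous_fderiv (by simp)).clm_apply continuous_const
  · refine le_trans ?_ (h x)
    rw [norm_iteratedFDeriv_one]
    simpa [pdR] using (fderiv ℝ a x).le_opNorm (EuclideanSpace.single j 1)

lemma fderiv_weight {f : E6 → ℂ} (hf : ContDiff ℝ (⊤ : ℕ∞) f) {a : E6 → ℝ}
    (ha : Function.HasTemperateGrowth a) (x : E6) :
    HasFDerivAt (fun x => (starRingEnd ℂ) (f x) * ((a x : ℝ) : ℂ))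
      ((starRingEnd ℂ) (f x) • (Complex.ofRealCLM.comp (fderiv ℝ a x)) +
        ((a x : ℝ) : ℂ) • ((Complex.conjCLE : ℂ →L[ℝ] ℂ).comp (fderiv ℝ f x))) x := by
  have h1 : HasFDerivAt f (fderiv ℝ f x) x := (hf.differentiable (by simp) x).hasFDerivAt
  have h2 : HasFDerivAt a (fderiv ℝ a x) x := (ha.1.differentiable (by simp) x).hasFDerivAt
  have h3 := (Complex.conjCLE : ℂ →L[ℝ] ℂ).hasFDerivAt.comp x h1
  have h4 := Complex.ofRealCLM.hasFDerivAt.comp x h2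
  exact h3.mul h4

lemma ibp {f : E6 → ℂ} (hf : IsSchwartz f) {a : E6 → ℝ} (ha : Function.HasTemperateGrowth a) :
    (∫ x, (starRingEnd ℂ) (f x) * lap f x * ((a x : ℝ) : ℂ)).im
      = - (∫ x, ∑ j, (starRingEnd ℂ) (f x) * pd f j x * ((pdR a j x : ℝ) : ℂ)).im := by
  have hA := polyB_a ha
  have hB := polyB_pda ha
  have key : ∀ j, (∫ x, (starRingEnd ℂ) (f x) * ((a x : ℝ) : ℂ) *
      fderiv ℝ (fun y => pd f j y) x (EuclideanSpace.single j 1)).im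
      = - (∫ x, (starRingEnd ℂ) (f x) * pd f j x * ((pdR a j x : ℝ) : ℂ)).im := by
    intro j
    have e : ∀ x, fderiv ℝ (fun x => (starRingEnd ℂ) (f x) * ((a x : ℝ) : ℂ)) x
        (EuclideanSpace.single j 1) =
        (starRingEnd ℂ) (f x) * ((pdR a j x : ℝ) : ℂ) +
          ((starRingEnd ℂ) (pd f j x)) * ((a x : ℝ) : ℂ) := by
      intro x
      rw [(fderiv_weight hf.1 ha x).fderiv]
      simp [pd, pdR, mul_comm]
    have i1 : Integrable (fun x => (starRingEnd ℂ) (f x) * ((pdR a j x : ℝ) : ℂ) * pd f j x) :=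
      ((hf.rd.conj.mul (hB j)).mul (hf.rd_pd j).poly).integrable
    have i2 : Integrable (fun x => (starRingEnd ℂ) (pd f j x) * ((a x : ℝ) : ℂ) * pd f j x) :=
      (((hf.rd_pd j).conj.mul hA).mul (hf.rd_pd j).poly).integrable
    rw [integral_mul_fderiv_eq_neg_fderiv_mul_of_integrable]
    · simp only [e, add_mul]
      rw [integral_add i1 i2]
      have z : (∫ x, (starRingEnd ℂ) (pd f j x) * ((a x : ℝ) : ℂ) * pd f j x).im = 0 := by
        have : ∀ x, (starRingEnd ℂ) (pd f j x) * ((a x : ℝ) : ℂ) * pd f j x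
            = ((Complex.normSq (pd f j x) * a x : ℝ) : ℂ) := by
          intro x
          push_cast
          rw [Complex.normSq_eq_conj_mul_self]; ring
        simp only [this]
        rw [integral_complex_ofReal]
        simp
      rw [Complex.neg_im, Complex.add_im, z, add_zero]
      congr 2
      refine integral_congr_ae (Eventually.of_forall fun x => ?_)
      simp only
      ring
    · simp only [e, add_mul]
      exact i1.add i2
    · exact ((hf.rd.conj.mul hA).mul (hf.rd_pdpd j).poly).integrable
    · exact ((hf.rd.conj.mul hA).mul (hf.rd_pd j).poly).integrable
    · exact fun x _ => (fderiv_weight hf.1 ha x).differentiableAt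
    · exact fun x _ => (contDiff_pd hf.1 j).differentiable (by simp) x
  rw [integral_finsetSum _ fun j _ => ((hf.rd.conj.mul (hf.rd_pd j).poly).mul (hB j)).integrable,
    Complex.im_sum, ← Finset.sum_neg_distrib]
  simp only [← key]
  rw [← Complex.im_sum, ← integral_finsetSum _ fun j _ =>
    ((hf.rd.conj.mul hA).mul (hf.rd_pdpd j).poly).integrable]
  congr 2
  ext x
  rw [← Finset.mul_sum, lap]
  ring

lemma alg (u v lu lv u' v' : ℂ)
    (h1 : Complex.I * u' + lu + v * (starRingEnd ℂ) u = 0)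
    (h2 : Complex.I * v' + ((1 / 2 : ℝ) : ℂ) * lv + u ^ 2 = 0) :
    2 * inner ℝ u u' + 2 * inner ℝ v v' =
      -(2 * (starRingEnd ℂ) u * lu + (starRingEnd ℂ) v * lv).im := by
  have e1 : u' = Complex.I * (lu + v * (starRingEnd ℂ) u) := by
    linear_combination (-Complex.I) * h1 + u' * Complex.I_mul_I
  have e2 : v' = Complex.I * (((1 / 2 : ℝ) : ℂ) * lv + u ^ 2) := by
    linear_combination (-Complex.I) * h2 + v' * Complex.I_mul_I
  rw [e1, e2, Complex.inner, Complex.inner]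
  simp [pow_two]
  ring

/-- first Virial identity. For a classical solution of the mass-resonance
(`κ = 1/2`) quadratic NLS system and a smooth polynomially growing weight `a`,
`(d/dt) ∫ (|u|² + |v|²) a = Im ∫ (2 conj(u)∇u + conj(v)∇v)·∇a`. -/
theorem virial_first (I : Set ℝ) (hI : IsOpen I) (u v : ℝ → E6 → ℂ)
    (hsol : IsClassicalSol (1 / 2) I u v)
    (a : E6 → ℝ) (ha : Function.HasTemperateGrowth a) :
    ∀ t ∈ I,
      deriv (fun s => ∫ x : E6, (‖u s x‖ ^ 2 + ‖v s x‖ ^ 2) * a x) t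
        = (∫ x : E6, ∑ j : Fin 6,
            (2 * (starRingEnd ℂ) (u t x) * pd (u t) j x
              + (starRingEnd ℂ) (v t x) * pd (v t) j x) * ((pdR a j x : ℝ) : ℂ)).im := by
  intro t ht
  obtain ⟨ε, hε, hball⟩ := Metric.nhds_basis_closedBall.mem_iff.1 (hI.mem_nhds ht)
  have hA := polyB_a ha
  have hB := polyB_pda ha
  have hsu := hsol.schwartz_u
  have hsv := hsol.schwartz_v
  set F' : ℝ → E6 → ℝ := fun s x =>
    -(2 * (starRingEnd ℂ) (u s x) * lap (u s) x + (starRingEnd ℂ) (v s x) * lap (v s) x).im * a x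
    with hF'
  have hdiff : ∀ s ∈ I, ∀ x, DifferentiableAt ℝ (fun s => u s x) s ∧
      DifferentiableAt ℝ (fun s => v s x) s := by
    intro s hs x
    have h1 : DifferentiableAt ℝ (fun p : ℝ × E6 => (u p.1 p.2, v p.1 p.2)) (s, x) :=
      (hsol.smooth.contDiffAt ((hI.prod isOpen_univ).mem_nhds ⟨hs, trivial⟩)).differentiableAt
        (by simp)
    have h2 : DifferentiableAt ℝ (fun s : ℝ => ((s, x) : ℝ × E6)) s := by fun_prop
    have h3 := h1.comp s h2
    exact ⟨h3.fst, h3.snd⟩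
  have hder : ∀ s ∈ I, ∀ x, HasDerivAt (fun s => (‖u s x‖ ^ 2 + ‖v s x‖ ^ 2) * a x)
      (F' s x) s := by
    intro s hs x
    have h1 := (hdiff s hs x).1.hasDerivAt.norm_sq
    have h2 := (hdiff s hs x).2.hasDerivAt.norm_sq
    have h3 := (h1.add h2).mul_const (a x)
    rw [alg _ _ _ _ _ _ (hsol.eqn_u s hs x) (hsol.eqn_v s hs x)] at h3
    exact h3
  obtain ⟨l, Ca, hCa⟩ := ha.2 0
  simp only [norm_iteratedFDeriv_zero] at hCa
  have hCa0 : 0 ≤ Ca := by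
    have := (norm_nonneg _).trans (hCa 0)
    simpa using this
  have hK := hsol.bounds _ hball (isCompact_closedBall t ε)
  obtain ⟨C0, hC0⟩ := hK 0 0
  obtain ⟨C1, hC1⟩ := hK (7 + l) 0
  obtain ⟨C2, hC2⟩ := hK 0 2
  simp only [norm_iteratedFDeriv_zero, pow_zero, one_mul] at hC0 hC1 hC2
  set M := 2 ^ (7 + l - 1) * (C0 + C1) with hM
  have hC20 : 0 ≤ C2 := (norm_nonneg _).trans (hC2 t (by simp [hε.le]) 0).1
  have hint : ∀ {f : E6 → ℂ}, IsSchwartz f →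
      Integrable (fun x => (starRingEnd ℂ) (f x) * lap f x * ((a x : ℝ) : ℂ)) := fun hf =>
    ((hf.rd.conj.mul hf.rd_lap.poly).mul hA).integrable
  have hcont : ∀ s ∈ I, Continuous (fun x => (‖u s x‖ ^ 2 + ‖v s x‖ ^ 2) * a x) := by
    intro s hs
    have := (hsu s hs).1.continuous
    have := (hsv s hs).1.continuous
    have := ha.1.continuous
    fun_prop
  have main := (hasDerivAt_integral_of_dominated_loc_of_deriv_le (μ := volume)
    (F := fun s x => (‖u s x‖ ^ 2 + ‖v s x‖ ^ 2) * a x) (F' := F')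
    (bound := fun x : E6 => (18 * C2 * M * Ca) * ((1 + ‖x‖) ^ 7)⁻¹)
    (Metric.closedBall_mem_nhds t hε)
    (by
      filter_upwards [hI.mem_nhds ht] with s hs
      exact (hcont s hs).aestronglyMeasurable)
    (by
      have h := ((((hsu t ht).rd.conj.mul (hsu t ht).rd.poly).add
        ((hsv t ht).rd.conj.mul (hsv t ht).rd.poly)).mul hA).integrable.re
      refine h.congr (Eventually.of_forall fun x => ?_)
      simp only [← Complex.normSq_eq_conj_mul_self, Complex.normSq_eq_norm_sq]
      norm_cast)
    (by
      have h1 := (hsu t ht).rd.1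
      have h2 := (hsv t ht).rd.1
      have h3 := (hsu t ht).rd_lap.1
      have h4 := (hsv t ht).rd_lap.1
      have h5 := ha.1.continuous
      have : Continuous (F' t) := by
        simp only [hF']
        fun_prop
      exact this.aestronglyMeasurable)
    (by
      refine Eventually.of_forall fun x s hs => ?_
      have hsI := hball hs
      have bu := pow_bound (norm_nonneg x) (norm_nonneg _) (hC0 s hs x).1 (hC1 s hs x).1
      have bv := pow_bound (norm_nonneg x) (norm_nonneg _) (hC0 s hs x).2 (hC1 s hs x).2
      rw [← hM] at bu bv
      have lu : ‖lap (u s) x‖ ≤ 6 * C2 :=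
        (norm_lap_le (hsu s hsI).1 x).trans (by linarith [(hC2 s hs x).1])
      have lv : ‖lap (v s) x‖ ≤ 6 * C2 :=
        (norm_lap_le (hsv s hsI).1 x).trans (by linarith [(hC2 s hs x).2])
      have hp : (0:ℝ) < (1 + ‖x‖) ^ 7 := by positivity
      rw [← div_eq_mul_inv, le_div_iff₀ hp]
      have e1 : ‖F' s x‖ ≤ (2 * ‖u s x‖ * (6 * C2) + ‖v s x‖ * (6 * C2)) *
          (Ca * (1 + ‖x‖) ^ l) := by
        simp only [hF', norm_mul, norm_neg]
        refine mul_le_mul ?_ (hCa x) (norm_nonneg _) (by positivity)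
        refine (Complex.abs_im_le_norm _).trans ((norm_add_le _ _).trans ?_)
        simp only [norm_mul, RCLike.norm_conj, Complex.norm_ofNat]
        gcongr
      calc ‖F' s x‖ * (1 + ‖x‖) ^ 7 ≤ _ := mul_le_mul_of_nonneg_right e1 hp.le
        _ = (6 * C2 * Ca) * (2 * ((1 + ‖x‖) ^ (7 + l) * ‖u s x‖) +
              (1 + ‖x‖) ^ (7 + l) * ‖v s x‖) := by ring
        _ ≤ (6 * C2 * Ca) * (2 * M + M) := by gcongr
        _ = _ := by ring)
    (integrable_bd.const_mul _)
    (Eventually.of_forall fun x s hs => hder s (hball hs) x)).2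
  rw [main.deriv]
  have g1 := hint (hsu t ht)
  have g2 := hint (hsv t ht)
  have p1 := ibp (hsu t ht) ha
  have p2 := ibp (hsv t ht) ha
  have q : ∀ {f : E6 → ℂ}, IsSchwartz f → Integrable (fun x =>
      ∑ j, (starRingEnd ℂ) (f x) * pd f j x * ((pdR a j x : ℝ) : ℂ)) := fun hf =>
    (RapDec.sum fun j => (hf.rd.conj.mul (hf.rd_pd j).poly).mul (hB j)).integrable
  have r1 : (∫ x, F' t x) = (∫ x, -(2 * ((starRingEnd ℂ) (u t x) * lap (u t) x * ((a x : ℝ) : ℂ))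
      + (starRingEnd ℂ) (v t x) * lap (v t) x * ((a x : ℝ) : ℂ))).im := by
    have h := integral_im (𝕜 := ℂ) (μ := volume) ((g1.const_mul 2).add g2).neg
    refine Eq.trans ?_ h
    refine integral_congr_ae (Eventually.of_forall fun x => ?_)
    simp [hF']
    ring
  have r2 : (∫ x : E6, ∑ j : Fin 6,
            (2 * (starRingEnd ℂ) (u t x) * pd (u t) j x
              + (starRingEnd ℂ) (v t x) * pd (v t) j x) * ((pdR a j x : ℝ) : ℂ))
      = ∫ x : E6, (2 * (∑ j, (starRingEnd ℂ) (u t x) * pd (u t) j x * ((pdR a j x : ℝ) : ℂ)) +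
        ∑ j, (starRingEnd ℂ) (v t x) * pd (v t) j x * ((pdR a j x : ℝ) : ℂ)) := by
    refine integral_congr_ae (Eventually.of_forall fun x => ?_)
    simp only
    rw [Finset.mul_sum, ← Finset.sum_add_distrib]
    refine Finset.sum_congr rfl fun j _ => ?_
    ring
  rw [r1, r2, integral_neg, integral_add (g1.const_mul 2) g2,
    integral_add ((q (hsu t ht)).const_mul 2) (q (hsv t ht)), integral_const_mul,
    integral_const_mul]
  have two : ∀ z : ℂ, (2 * z).im = 2 * z.im := fun z => by simp
  rw [Complex.neg_im, Complex.add_im, Complex.add_im, two, two, p1, p2]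
  ring
end
end

section
/- Let κ = 1/2 and let (u, v) be a classical solution of the quadratic NLS system on an open interval I. Define the variance V(t) = ∫_{ℝ⁶} |x|² (|u(t,x)|² + |v(t,x)|²) dx. Then V is twice differentiable on I and V''(t) = 4·(2H(u(t),v(t)) − 3R(u(t),v(t))) for all t ∈ I. -/
open MeasureTheory Real Filter

noncomputable section

open scoped ContDiff Topology

namespace NLSvar

abbrev Fn := ℝ → E6 → ℂ

def P (j : Fin 6) (f : Fn) : Fn := fun t x => pd (f t) j x
def T (f : Fn) : Fn := fun t x => deriv (fun s => f s x) t
def X (j : Fin 6) (f : Fn) : Fn := fun t x => (x j : ℂ) * f t x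
def Cj (f : Fn) : Fn := fun t x => (starRingEnd ℂ) (f t x)
def un (f : Fn) : ℝ × E6 → ℂ := fun p => f p.1 p.2
def Dd (w : ℝ × E6) (f : Fn) : Fn := fun t x => fderiv ℝ (un f) (t, x) w

abbrev ej (j : Fin 6) : E6 := EuclideanSpace.single j 1

def Sm (I : Set ℝ) (f : Fn) : Prop := ContDiffOn ℝ ∞ (un f) (I ×ˢ Set.univ)

def Dec (I : Set ℝ) (f : Fn) : Prop :=
  ∀ K : Set ℝ, K ⊆ I → IsCompact K → ∀ k : ℕ, ∃ C : ℝ, ∀ t ∈ K, ∀ x : E6, ‖x‖ ^ k * ‖f t x‖ ≤ C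

def An (I : Set ℝ) : ℕ → Fn → Prop
  | 0, f => Sm I f ∧ Dec I f
  | n + 1, f => An I n f ∧ ∀ j, An I n (P j f)

def A (I : Set ℝ) (f : Fn) : Prop := ∀ n, An I n f

variable {I : Set ℝ} {f g : Fn} {t : ℝ} {x : E6}

theorem isOpen_dom (hI : IsOpen I) : IsOpen (I ×ˢ (Set.univ : Set E6)) := hI.prod isOpen_univ

theorem Sm.contDiffAt (hI : IsOpen I) (hf : Sm I f) (ht : t ∈ I) (x : E6) :
    ContDiffAt ℝ ∞ (un f) (t, x) :=
  (hf (t, x) ⟨ht, trivial⟩).contDiffAt ((isOpen_dom hI).mem_nhds ⟨ht, trivial⟩)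

theorem Sm.hasFDerivAt (hI : IsOpen I) (hf : Sm I f) (ht : t ∈ I) (x : E6) :
    HasFDerivAt (un f) (fderiv ℝ (un f) (t, x)) (t, x) :=
  ((hf.contDiffAt hI ht x).differentiableAt (by simp)).hasFDerivAt

theorem Sm.slice (hI : IsOpen I) (hf : Sm I f) (ht : t ∈ I) : ContDiff ℝ ∞ (f t) := by
  rw [contDiff_iff_contDiffAt]
  intro x
  have h1 : ContDiffAt ℝ ∞ (fun y : E6 => ((t, y) : ℝ × E6)) x := by fun_prop
  exact (hf.contDiffAt hI ht x).comp x h1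

theorem Sm.diff (hI : IsOpen I) (hf : Sm I f) (ht : t ∈ I) (x : E6) :
    DifferentiableAt ℝ (f t) x := (hf.slice hI ht).differentiable (by simp) x

theorem Sm.hasT (hI : IsOpen I) (hf : Sm I f) (ht : t ∈ I) (x : E6) :
    HasDerivAt (fun s => f s x) (Dd (1, 0) f t x) t := by
  have h1 : HasDerivAt (fun s : ℝ => ((s, x) : ℝ × E6)) (1, 0) t :=
    (hasDerivAt_id t).prodMk (hasDerivAt_const t x)
  exact (hf.hasFDerivAt hI ht x).comp_hasDerivAt t h1

theorem Sm.T_eq (hI : IsOpen I) (hf : Sm I f) (ht : t ∈ I) (x : E6) :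
    T f t x = Dd (1, 0) f t x := (hf.hasT hI ht x).deriv

theorem Sm.hasT' (hI : IsOpen I) (hf : Sm I f) (ht : t ∈ I) (x : E6) :
    HasDerivAt (fun s => f s x) (T f t x) t := by
  rw [hf.T_eq hI ht]; exact hf.hasT hI ht x

theorem Sm.P_eq (hI : IsOpen I) (hf : Sm I f) (ht : t ∈ I) (j : Fin 6) (x : E6) :
    P j f t x = Dd (0, ej j) f t x := by
  have h1 : HasFDerivAt (fun y : E6 => ((t, y) : ℝ × E6)) (ContinuousLinearMap.inr ℝ ℝ E6) x :=
    hasFDerivAt_prodMk_right t x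
  have h2 : HasFDerivAt (f t) _ x := (hf.hasFDerivAt hI ht x).comp x h1
  simp only [P, pd, Dd]
  rw [h2.fderiv]; simp

theorem Sm.congr (hf : Sm I f) (h : ∀ t ∈ I, ∀ x, g t x = f t x) : Sm I g :=
  ContDiffOn.congr hf (fun p hp => h p.1 hp.1 p.2)

theorem Sm.Dd (hI : IsOpen I) (hf : Sm I f) (w : ℝ × E6) : Sm I (Dd w f) := by
  have h := ContDiffOn.fderiv_of_isOpen (m := ∞) hf (isOpen_dom hI) (by simp)
  exact h.clm_apply contDiffOn_const

theorem Sm.P (hI : IsOpen I) (hf : Sm I f) (j : Fin 6) : Sm I (P j f) :=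
  (hf.Dd hI (0, ej j)).congr fun _ ht x => hf.P_eq hI ht j x

theorem Sm.T (hI : IsOpen I) (hf : Sm I f) : Sm I (T f) :=
  (hf.Dd hI (1, 0)).congr fun _ ht x => hf.T_eq hI ht x

theorem Dd_comm (hI : IsOpen I) (hf : Sm I f) (ht : t ∈ I) (x : E6) (w z : ℝ × E6) :
    Dd w (Dd z f) t x = Dd z (Dd w f) t x := by
  have hs : IsSymmSndFDerivAt ℝ (un f) (t, x) :=
    (hf.contDiffAt hI ht x).isSymmSndFDerivAt (by
      simp only [minSmoothness_of_isRCLikeNormedField]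
      exact WithTop.coe_le_coe.2 le_top)
  have hd : DifferentiableAt ℝ (fderiv ℝ (un f)) (t, x) :=
    ((hf.contDiffAt hI ht x).fderiv_right (m := ∞) (by simp)).differentiableAt (by simp)
  have key : ∀ w z : ℝ × E6, Dd w (Dd z f) t x = fderiv ℝ (fderiv ℝ (un f)) (t, x) w z := by
    intro w z
    have h : un (Dd z f) = fun p => fderiv ℝ (un f) p z := rfl
    simp only [Dd] at h ⊢
    rw [h, fderiv_clm_apply hd (differentiableAt_const z)]
    simp
  rw [key, key, hs]

theorem P_congr (h : ∀ t ∈ I, ∀ x, g t x = f t x) (j : Fin 6) :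
    ∀ t ∈ I, ∀ x, P j g t x = P j f t x := by
  intro t ht x
  have : g t = f t := funext (h t ht)
  simp [P, this]

theorem T_congr (hI : IsOpen I) (h : ∀ t ∈ I, ∀ x, g t x = f t x) :
    ∀ t ∈ I, ∀ x, T g t x = T f t x := by
  intro t ht x
  apply Filter.EventuallyEq.deriv_eq
  filter_upwards [hI.mem_nhds ht] with s hs using h s hs x

theorem PP_comm (hI : IsOpen I) (hf : Sm I f) (ht : t ∈ I) (x : E6) (j k : Fin 6) :
    P j (P k f) t x = P k (P j f) t x := by
  rw [P_congr (fun t ht x => hf.P_eq hI ht k x) j t ht x,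
    P_congr (fun t ht x => hf.P_eq hI ht j x) k t ht x,
    (hf.Dd hI _).P_eq hI ht, (hf.Dd hI _).P_eq hI ht, Dd_comm hI hf ht]

theorem TP_comm (hI : IsOpen I) (hf : Sm I f) (ht : t ∈ I) (x : E6) (j : Fin 6) :
    T (P j f) t x = P j (T f) t x := by
  rw [T_congr hI (fun t ht x => hf.P_eq hI ht j x) t ht x,
    P_congr (fun t ht x => hf.T_eq hI ht x) j t ht x,
    (hf.Dd hI _).P_eq hI ht, (hf.Dd hI _).T_eq hI ht, Dd_comm hI hf ht]

/-! closure of smoothness -/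
theorem Sm.add (hf : Sm I f) (hg : Sm I g) : Sm I (f + g) := ContDiffOn.add hf hg
theorem Sm.mul (hf : Sm I f) (hg : Sm I g) : Sm I (f * g) := ContDiffOn.mul hf hg
theorem Sm.smul (c : ℂ) (hf : Sm I f) : Sm I (c • f) := ContDiffOn.const_smul c hf
theorem Sm.Cj (hf : Sm I f) : Sm I (Cj f) := Complex.conjCLE.contDiff.comp_contDiffOn hf
theorem Sm.X (j : Fin 6) (hf : Sm I f) : Sm I (X j f) := by
  have h : ContDiff ℝ ∞ (fun p : ℝ × E6 => ((p.2 j : ℝ) : ℂ)) :=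
    Complex.ofRealCLM.contDiff.comp (by fun_prop)
  exact h.contDiffOn.mul hf

/-! closure of decay -/
theorem Dec.add (hf : Dec I f) (hg : Dec I g) : Dec I (f + g) := by
  intro K hK hc k
  obtain ⟨C, hC⟩ := hf K hK hc k
  obtain ⟨C', hC'⟩ := hg K hK hc k
  refine ⟨C + C', fun t ht x => ?_⟩
  have := mul_le_mul_of_nonneg_left (norm_add_le (f t x) (g t x)) (pow_nonneg (norm_nonneg x) k)
  simp only [Pi.add_apply]
  linarith [hC t ht x, hC' t ht x]

theorem Dec.mul (hf : Dec I f) (hg : Dec I g) : Dec I (f * g) := by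
  intro K hK hc k
  obtain ⟨C, hC⟩ := hf K hK hc k
  obtain ⟨C', hC'⟩ := hg K hK hc 0
  refine ⟨C * C', fun t ht x => ?_⟩
  simp only [Pi.mul_apply, norm_mul, ← mul_assoc]
  have h2 := hC' t ht x
  rw [pow_zero, one_mul] at h2
  exact mul_le_mul (hC t ht x) h2 (norm_nonneg _) (le_trans (by positivity) (hC t ht x))

theorem Dec.smul (c : ℂ) (hf : Dec I f) : Dec I (c • f) := by
  intro K hK hc k
  obtain ⟨C, hC⟩ := hf K hK hc k
  refine ⟨‖c‖ * C, fun t ht x => ?_⟩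
  have := mul_le_mul_of_nonneg_left (hC t ht x) (norm_nonneg c)
  simp only [Pi.smul_apply, norm_smul]
  linarith

theorem Dec.Cj (hf : Dec I f) : Dec I (Cj f) := by
  intro K hK hc k
  obtain ⟨C, hC⟩ := hf K hK hc k
  exact ⟨C, fun t ht x => by simpa [NLSvar.Cj] using hC t ht x⟩

theorem Dec.X (j : Fin 6) (hf : Dec I f) : Dec I (X j f) := by
  intro K hK hc k
  obtain ⟨C, hC⟩ := hf K hK hc (k + 1)
  refine ⟨C, fun t ht x => le_trans ?_ (hC t ht x)⟩
  have h1 : ‖x j‖ ≤ ‖x‖ := PiLp.norm_apply_le x j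
  simp only [NLSvar.X, norm_mul, Complex.norm_real, pow_succ, mul_assoc]
  gcongr

theorem Dec.congr (hf : Dec I f) (h : ∀ t ∈ I, ∀ x, g t x = f t x) : Dec I g := by
  intro K hK hc k
  obtain ⟨C, hC⟩ := hf K hK hc k
  exact ⟨C, fun t ht x => by rw [h t (hK ht) x]; exact hC t ht x⟩

/-! pointwise rules -/
theorem P_add (hI : IsOpen I) (hf : Sm I f) (hg : Sm I g) (ht : t ∈ I) (x : E6) (j : Fin 6) :
    P j (f + g) t x = P j f t x + P j g t x := by
  simp only [P, pd, Pi.add_apply]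
  rw [fderiv_add (hf.diff hI ht x) (hg.diff hI ht x)]; rfl

theorem P_mul (hI : IsOpen I) (hf : Sm I f) (hg : Sm I g) (ht : t ∈ I) (x : E6) (j : Fin 6) :
    P j (f * g) t x = P j f t x * g t x + f t x * P j g t x := by
  simp only [P, pd, Pi.mul_apply]
  rw [fderiv_mul (hf.diff hI ht x) (hg.diff hI ht x)]; simp; ring

theorem P_smul (hI : IsOpen I) (c : ℂ) (hf : Sm I f) (ht : t ∈ I) (x : E6) (j : Fin 6) :
    P j (c • f) t x = c * P j f t x := by
  simp only [P, pd, Pi.smul_apply]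
  rw [fderiv_const_smul (hf.diff hI ht x)]; rfl

theorem P_Cj (hI : IsOpen I) (hf : Sm I f) (ht : t ∈ I) (x : E6) (j : Fin 6) :
    P j (Cj f) t x = Cj (P j f) t x := by
  have h := (Complex.conjCLE.toContinuousLinearMap.hasFDerivAt.comp x (hf.diff hI ht x).hasFDerivAt)
  have h2 : HasFDerivAt (Cj f t) _ x := h
  simp only [P, pd]
  rw [h2.fderiv]; rfl

theorem P_X (hI : IsOpen I) (hf : Sm I f) (ht : t ∈ I) (x : E6) (j k : Fin 6) :
    P j (X k f) t x = (if k = j then f t x else 0) + (x k : ℂ) * P j f t x := by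
  have h1 : HasFDerivAt (fun y : E6 => ((y k : ℝ) : ℂ))
      (Complex.ofRealCLM.comp (EuclideanSpace.proj k : E6 →L[ℝ] ℝ)) x :=
    (Complex.ofRealCLM.comp
      (EuclideanSpace.proj k : E6 →L[ℝ] ℝ)).hasFDerivAt
  have h2 : HasFDerivAt (X k f t) _ x := h1.mul (hf.diff hI ht x).hasFDerivAt
  simp only [P, pd]
  rw [h2.fderiv]
  by_cases hk : k = j <;> simp [hk] <;> ring

theorem T_add (hI : IsOpen I) (hf : Sm I f) (hg : Sm I g) (ht : t ∈ I) (x : E6) :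
    T (f + g) t x = T f t x + T g t x :=
  ((hf.hasT' hI ht x).add (hg.hasT' hI ht x)).deriv

theorem T_mul (hI : IsOpen I) (hf : Sm I f) (hg : Sm I g) (ht : t ∈ I) (x : E6) :
    T (f * g) t x = T f t x * g t x + f t x * T g t x :=
  ((hf.hasT' hI ht x).mul (hg.hasT' hI ht x)).deriv

theorem T_smul (hI : IsOpen I) (c : ℂ) (hf : Sm I f) (ht : t ∈ I) (x : E6) :
    T (c • f) t x = c * T f t x :=
  ((hf.hasT' hI ht x).const_mul c).deriv

theorem T_X (hI : IsOpen I) (hf : Sm I f) (ht : t ∈ I) (x : E6) (k : Fin 6) :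
    T (X k f) t x = (x k : ℂ) * T f t x :=
  ((hf.hasT' hI ht x).const_mul (x k : ℂ)).deriv

theorem T_Cj (hI : IsOpen I) (hf : Sm I f) (ht : t ∈ I) (x : E6) :
    T (Cj f) t x = Cj (T f) t x :=
  HasDerivAt.deriv (Complex.conjCLE.toContinuousLinearMap.hasFDerivAt.comp_hasDerivAt t
    (hf.hasT' hI ht x))

/-! the class A -/
theorem An.sm {n : ℕ} (h : An I n f) : Sm I f := by
  induction n with
  | zero => exact h.1
  | succ n ih => exact ih h.1

theorem An.congr {n : ℕ} : ∀ {f g : Fn}, An I n f → (∀ t ∈ I, ∀ x, g t x = f t x) → An I n g := by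
  induction n with
  | zero => exact fun h e => ⟨h.1.congr e, h.2.congr e⟩
  | succ n ih => exact fun h e => ⟨ih h.1 e, fun j => ih (h.2 j) (P_congr e j)⟩

theorem An.add (hI : IsOpen I) {n : ℕ} : ∀ {f g : Fn}, An I n f → An I n g → An I n (f + g) := by
  induction n with
  | zero => exact fun h e => ⟨h.1.add e.1, h.2.add e.2⟩
  | succ n ih =>
    exact fun h e => ⟨ih h.1 e.1, fun j => (ih (h.2 j) (e.2 j)).congr
      fun t ht x => P_add hI h.1.sm e.1.sm ht x j⟩

theorem An.mul (hI : IsOpen I) {n : ℕ} : ∀ {f g : Fn}, An I n f → An I n g → An I n (f * g) := by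
  induction n with
  | zero => exact fun h e => ⟨h.1.mul e.1, h.2.mul e.2⟩
  | succ n ih =>
    exact fun h e => ⟨ih h.1 e.1, fun j => ((ih (h.2 j) e.1).add hI (ih h.1 (e.2 j))).congr
      fun t ht x => P_mul hI h.1.sm e.1.sm ht x j⟩

theorem An.smul (hI : IsOpen I) (c : ℂ) {n : ℕ} : ∀ {f : Fn}, An I n f → An I n (c • f) := by
  induction n with
  | zero => exact fun h => ⟨h.1.smul c, h.2.smul c⟩
  | succ n ih =>
    exact fun h => ⟨ih h.1, fun j => (ih (h.2 j)).congr
      fun t ht x => P_smul hI c h.1.sm ht x j⟩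

theorem An.Cj (hI : IsOpen I) {n : ℕ} : ∀ {f : Fn}, An I n f → An I n (Cj f) := by
  induction n with
  | zero => exact fun h => ⟨h.1.Cj, h.2.Cj⟩
  | succ n ih =>
    exact fun h => ⟨ih h.1, fun j => (ih (h.2 j)).congr
      fun t ht x => P_Cj hI h.1.sm ht x j⟩

theorem An.X (hI : IsOpen I) (k : Fin 6) {n : ℕ} : ∀ {f : Fn}, An I n f → An I n (X k f) := by
  induction n with
  | zero => exact fun h => ⟨h.1.X k, h.2.X k⟩
  | succ n ih =>
    intro f h
    refine ⟨ih h.1, fun j => ?_⟩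
    refine ((h.1.smul hI (if k = j then 1 else 0)).add hI (ih (h.2 j))).congr fun t ht x => ?_
    rw [P_X hI h.1.sm ht]
    by_cases hk : k = j <;> simp [hk, NLSvar.X]

theorem A.sm (h : A I f) : Sm I f := (h 0).1
theorem A.dec (h : A I f) : Dec I f := (h 0).2
theorem A.congr (h : A I f) (e : ∀ t ∈ I, ∀ x, g t x = f t x) : A I g := fun n => (h n).congr e
theorem A.add (hI : IsOpen I) (h : A I f) (e : A I g) : A I (f + g) := fun n => (h n).add hI (e n)
theorem A.mul (hI : IsOpen I) (h : A I f) (e : A I g) : A I (f * g) := fun n => (h n).mul hI (e n)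
theorem A.smul (hI : IsOpen I) (c : ℂ) (h : A I f) : A I (c • f) := fun n => (h n).smul hI c
theorem A.Cj (hI : IsOpen I) (h : A I f) : A I (Cj f) := fun n => (h n).Cj hI
theorem A.X (hI : IsOpen I) (k : Fin 6) (h : A I f) : A I (X k f) := fun n => (h n).X hI k
theorem A.P (j : Fin 6) (h : A I f) : A I (P j f) := fun n => (h (n + 1)).2 j

def Bd (I : Set ℝ) (f : Fn) : Prop := ∀ K : Set ℝ, K ⊆ I → IsCompact K → ∀ k n : ℕ,
  ∃ C : ℝ, ∀ t ∈ K, ∀ x : E6, ‖x‖ ^ k * ‖iteratedFDeriv ℝ n (f t) x‖ ≤ C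

theorem Bd.P (hI : IsOpen I) (hs : Sm I f) (h : Bd I f) (j : Fin 6) : Bd I (P j f) := by
  intro K hK hc k n
  obtain ⟨C, hC⟩ := h K hK hc k (n + 1)
  refine ⟨C, fun t ht x => le_trans ?_ (hC t ht x)⟩
  have hcd : ContDiffAt ℝ ∞ (fderiv ℝ (f t)) x :=
    ((hs.slice hI (hK ht)).fderiv_right (m := ∞) (by simp)).contDiffAt
  have h1 := norm_iteratedFDeriv_clm_apply_const (c := ej j) hcd (n := n)
    (by exact_mod_cast le_top)
  rw [norm_iteratedFDeriv_fderiv] at h1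
  simp only [ej, PiLp.norm_single, norm_one, one_mul] at h1
  exact mul_le_mul_of_nonneg_left h1 (by positivity)

theorem A_of_Bd (hI : IsOpen I) (hs : Sm I f) (h : Bd I f) : A I f := by
  intro n
  induction n generalizing f with
  | zero =>
    refine ⟨hs, fun K hK hc k => ?_⟩
    obtain ⟨C, hC⟩ := h K hK hc k 0
    exact ⟨C, fun t ht x => by simpa using hC t ht x⟩
  | succ n ih => exact ⟨ih hs h, fun j => ih (hs.P hI j) (h.P hI hs j)⟩

/-! integrals -/
theorem Dec.bound (h : Dec I f) {K : Set ℝ} (hK : K ⊆ I) (hc : IsCompact K) :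
    ∃ C : ℝ, ∀ t ∈ K, ∀ x, ‖f t x‖ ≤ C * (1 + ‖x‖) ^ (-(7 : ℝ)) := by
  obtain ⟨C, hC⟩ := h K hK hc 0
  obtain ⟨C', hC'⟩ := h K hK hc 7
  refine ⟨2 ^ 6 * (C + C'), fun t ht x => ?_⟩
  have h0 := hC t ht x
  have h7 := hC' t ht x
  have hx := norm_nonneg x
  have hp : (1 + ‖x‖) ^ 7 ≤ 2 ^ 6 * (1 + ‖x‖ ^ 7) := by
    simpa using add_pow_le (zero_le_one' ℝ) hx 7
  rw [Real.rpow_neg (by positivity), ← div_eq_mul_inv, le_div_iff₀ (by positivity)]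
  have : (1 + ‖x‖) ^ (7 : ℝ) = (1 + ‖x‖) ^ 7 := by norm_cast
  rw [this]
  have := mul_le_mul_of_nonneg_left hp (norm_nonneg (f t x))
  simp only [pow_zero, one_mul] at h0
  nlinarith

theorem intJ : Integrable (fun x : E6 => (1 + ‖x‖) ^ (-(7 : ℝ))) :=
  integrable_one_add_norm (by simp; norm_num)

theorem Sm.aesm (hI : IsOpen I) (hf : Sm I f) (ht : t ∈ I) :
    AEStronglyMeasurable (f t) (volume : Measure E6) :=
  (hf.slice hI ht).continuous.aestronglyMeasurable

theorem A.integrable (hI : IsOpen I) (h : A I f) (ht : t ∈ I) : Integrable (f t) := by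
  obtain ⟨C, hC⟩ := h.dec.bound (Set.singleton_subset_iff.2 ht) isCompact_singleton
  exact (intJ.const_mul C).mono' (h.sm.aesm hI ht) (Eventually.of_forall (hC t rfl))

theorem A.hasDerivAt (hI : IsOpen I) (h : A I f) (h' : A I (T f)) (ht : t ∈ I) :
    HasDerivAt (fun s => ∫ x, f s x) (∫ x, T f t x) t := by
  obtain ⟨K, hKn, hKI, hKc⟩ := local_compact_nhds (hI.mem_nhds ht)
  obtain ⟨C, hC⟩ := h'.dec.bound hKI hKc
  refine (hasDerivAt_integral_of_dominated_loc_of_deriv_le hKn ?_ (h.integrable hI ht)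
    (h'.sm.aesm hI ht) (Eventually.of_forall fun x s hs => hC s hs x) (intJ.const_mul C)
    (Eventually.of_forall fun x s hs => h.sm.hasT' hI (hKI hs) x)).2
  filter_upwards [hI.mem_nhds ht] with s hs using h.sm.aesm hI hs

theorem A.integral_P (hI : IsOpen I) (h : A I f) (ht : t ∈ I) (j : Fin 6) :
    ∫ x, NLSvar.P j f t x = 0 := by
  have := integral_mul_fderiv_eq_neg_fderiv_mul_of_integrable (μ := (volume : Measure E6))
    (f := fun _ : E6 => (1 : ℂ)) (g := f t) (v := ej j) (by simp)
    (by simp only [one_mul]; exact (h.P j).integrable hI ht) (by simpa using h.integrable hI ht)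
    (by intro x _; fun_prop) (fun x _ => h.sm.diff hI ht x)
  simpa [NLSvar.P, pd] using this

theorem integral_div (hI : IsOpen I) (w : Fin 6 → Fn) (hw : ∀ k, A I (w k)) (hg : A I g)
    (ht : t ∈ I) (h : ∀ x, f t x = (∑ k, P k (w k) t x) + g t x) :
    ∫ x, f t x = ∫ x, g t x := by
  simp_rw [h]
  rw [integral_add (integrable_finsetSum _ fun k _ => ((hw k).P k).integrable hI ht)
    (hg.integrable hI ht), integral_finsetSum _ fun k _ => ((hw k).P k).integrable hI ht]
  rw [Finset.sum_eq_zero fun k _ => (hw k).integral_P hI ht k, zero_add]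

theorem Sm.sum {F : Fin 6 → Fn} (h : ∀ k, Sm I (F k)) : Sm I (∑ k, F k) := by
  have : un (∑ k, F k) = fun p => ∑ k, un (F k) p := by
    funext p; simp [un]
  unfold Sm
  rw [this]
  exact ContDiffOn.sum fun k _ => h k

theorem A.sum (hI : IsOpen I) {F : Fin 6 → Fn} (h : ∀ k, A I (F k)) : A I (∑ k, F k) := by
  rw [Fin.sum_univ_six]
  exact (((((h 0).add hI (h 1)).add hI (h 2)).add hI (h 3)).add hI (h 4)).add hI (h 5)

theorem P_sum (hI : IsOpen I) {F : Fin 6 → Fn} (h : ∀ k, Sm I (F k)) (ht : t ∈ I) (x : E6)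
    (j : Fin 6) : P j (∑ k, F k) t x = ∑ k, P j (F k) t x := by
  have h1 : (∑ k, F k) t = fun y => ∑ k, F k t y := by funext y; simp
  simp only [P, pd]
  rw [h1, fderiv_fun_sum fun k _ => (h k).diff hI ht x]
  simp

theorem T_sum (hI : IsOpen I) {F : Fin 6 → Fn} (h : ∀ k, Sm I (F k)) (ht : t ∈ I) (x : E6) :
    T (∑ k, F k) t x = ∑ k, T (F k) t x := by
  have h1 : (fun s => (∑ k, F k) s x) = fun s => ∑ k, F k s x := by funext y; simp
  simp only [T]
  rw [h1]
  exact (HasDerivAt.fun_sum fun k _ => (h k).hasT' hI ht x).deriv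

def A2 (I : Set ℝ) (f : Fn) : Prop := A I f ∧ A I (T f)

theorem A2.sm (h : A2 I f) : Sm I f := h.1.sm
theorem A2.add (hI : IsOpen I) (h : A2 I f) (e : A2 I g) : A2 I (f + g) :=
  ⟨h.1.add hI e.1, (h.2.add hI e.2).congr fun _ ht x => T_add hI h.sm e.sm ht x⟩
theorem A2.mul (hI : IsOpen I) (h : A2 I f) (e : A2 I g) : A2 I (f * g) :=
  ⟨h.1.mul hI e.1, ((h.2.mul hI e.1).add hI (h.1.mul hI e.2)).congr
    fun _ ht x => T_mul hI h.sm e.sm ht x⟩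
theorem A2.smul (hI : IsOpen I) (c : ℂ) (h : A2 I f) : A2 I (c • f) :=
  ⟨h.1.smul hI c, (h.2.smul hI c).congr fun _ ht x => T_smul hI c h.sm ht x⟩
theorem A2.X (hI : IsOpen I) (k : Fin 6) (h : A2 I f) : A2 I (X k f) :=
  ⟨h.1.X hI k, (h.2.X hI k).congr fun _ ht x => T_X hI h.sm ht x k⟩
theorem A2.P (hI : IsOpen I) (k : Fin 6) (h : A2 I f) : A2 I (P k f) :=
  ⟨h.1.P k, (h.2.P k).congr fun _ ht x => TP_comm hI h.sm ht x k⟩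
theorem A2.sum (hI : IsOpen I) {F : Fin 6 → Fn} (h : ∀ k, A2 I (F k)) : A2 I (∑ k, F k) :=
  ⟨A.sum hI fun k => (h k).1, (A.sum hI fun k => (h k).2).congr
    fun _ ht x => by rw [T_sum hI (fun k => (h k).sm) ht x]; simp⟩

section main
variable (u a v b : Fn)

def Nu : Fn := Complex.I • ((∑ k, P k (P k u)) + v * a)
def Na : Fn := (-Complex.I) • ((∑ k, P k (P k a)) + b * u)
def Nv : Fn := Complex.I • ((1 / 2 : ℂ) • (∑ k, P k (P k v)) + u * u)
def Nb : Fn := (-Complex.I) • ((1 / 2 : ℂ) • (∑ k, P k (P k b)) + a * a)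

def Q (j : Fin 6) : Fn :=
  a * P j u + (-1 : ℂ) • (u * P j a) + (1 / 2 : ℂ) • (b * P j v + (-1 : ℂ) • (v * P j b))
def S0 (u a : Fn) (j k : Fin 6) : Fn :=
  a * P j (P k u) + u * P j (P k a) + (-1 : ℂ) • (P k a * P j u + P k u * P j a)
def S (j k : Fin 6) : Fn := S0 u a j k + (1 / 4 : ℂ) • S0 v b j k
def G : Fn := b * (u * u) + v * (a * a)
def F0 : Fn := ∑ k, X k (X k (u * a + v * b))
def F1 : Fn := ∑ j, (-2 * Complex.I) • X j (Q u a v b j)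
def F2 : Fn := ∑ k, ((8 : ℂ) • (P k a * P k u) + (2 : ℂ) • (P k b * P k v) + (-1 : ℂ) • G u a v b)
def w1 (j : Fin 6) : Fn := Complex.I • ∑ k, X k (X k (Q u a v b j))
def w2 (k : Fin 6) : Fn := (2 : ℂ) • (∑ j, X j (S u a v b j k)) + X k (G u a v b)
  + (-2 : ℂ) • (a * P k u + u * P k a) + (-1 / 2 : ℂ) • (b * P k v + v * P k b)

structure Sys (I : Set ℝ) : Prop where
  hI : IsOpen I
  hu : A I u
  ha : A I a
  hv : A I v
  hb : A I b
  Tu : ∀ t ∈ I, ∀ x, T u t x = Nu u a v t x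
  Ta : ∀ t ∈ I, ∀ x, T a t x = Na u a b t x
  Tv : ∀ t ∈ I, ∀ x, T v t x = Nv u v t x
  Tb : ∀ t ∈ I, ∀ x, T b t x = Nb a b t x

variable {u a v b}

theorem Sys.u2 (h : Sys u a v b I) : A2 I u :=
  ⟨h.hu, (((A.sum h.hI fun k => (h.hu.P k).P k).add h.hI (h.hv.mul h.hI h.ha)).smul h.hI _).congr h.Tu⟩
theorem Sys.a2 (h : Sys u a v b I) : A2 I a :=
  ⟨h.ha, (((A.sum h.hI fun k => (h.ha.P k).P k).add h.hI (h.hb.mul h.hI h.hu)).smul h.hI _).congr h.Ta⟩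
theorem Sys.v2 (h : Sys u a v b I) : A2 I v :=
  ⟨h.hv, ((((A.sum h.hI fun k => (h.hv.P k).P k).smul h.hI _).add h.hI
    (h.hu.mul h.hI h.hu)).smul h.hI _).congr h.Tv⟩
theorem Sys.b2 (h : Sys u a v b I) : A2 I b :=
  ⟨h.hb, ((((A.sum h.hI fun k => (h.hb.P k).P k).smul h.hI _).add h.hI
    (h.ha.mul h.hI h.ha)).smul h.hI _).congr h.Tb⟩

theorem Sys.Q2 (h : Sys u a v b I) (j : Fin 6) : A2 I (Q u a v b j) :=
  have hI := h.hI
  ((h.a2.mul hI (h.u2.P hI j)).add hI ((h.u2.mul hI (h.a2.P hI j)).smul hI _)).add hI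
  (((h.b2.mul hI (h.v2.P hI j)).add hI ((h.v2.mul hI (h.b2.P hI j)).smul hI _)).smul hI _)

theorem S0_A (hI : IsOpen I) (hu : A I u) (ha : A I a) (j k : Fin 6) : A I (S0 u a j k) :=
  ((ha.mul hI ((hu.P k).P j)).add hI (hu.mul hI ((ha.P k).P j))).add hI
    ((((ha.P k).mul hI (hu.P j)).add hI ((hu.P k).mul hI (ha.P j))).smul hI _)

theorem Sys.SA (h : Sys u a v b I) (j k : Fin 6) : A I (S u a v b j k) :=
  (S0_A h.hI h.hu h.ha j k).add h.hI ((S0_A h.hI h.hv h.hb j k).smul h.hI _)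

theorem Sys.GA (h : Sys u a v b I) : A I (G u a v b) :=
  have hI := h.hI
  (h.hb.mul hI (h.hu.mul hI h.hu)).add hI (h.hv.mul hI (h.ha.mul hI h.ha))

theorem Sys.F0A (h : Sys u a v b I) : A2 I (F0 u a v b) :=
  have hI := h.hI
  A2.sum hI fun k => (((h.u2.mul hI h.a2).add hI (h.v2.mul hI h.b2)).X hI k).X hI k

theorem Sys.F1A (h : Sys u a v b I) : A2 I (F1 u a v b) :=
  A2.sum h.hI fun k => ((h.Q2 k).X h.hI k).smul h.hI _

theorem Sys.F2A (h : Sys u a v b I) : A I (F2 u a v b) :=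
  have hI := h.hI
  A.sum hI fun k => (((((h.ha.P k).mul hI (h.hu.P k))).smul hI _).add hI
    ((((h.hb.P k).mul hI (h.hv.P k))).smul hI _)).add hI (h.GA.smul hI _)

theorem Sys.w1A (h : Sys u a v b I) (j : Fin 6) : A I (w1 u a v b j) :=
  (A.sum h.hI fun k => ((h.Q2 j).1.X h.hI k).X h.hI k).smul h.hI _

theorem Sys.w2A (h : Sys u a v b I) (k : Fin 6) : A I (w2 u a v b k) :=
  have hI := h.hI
  (((((A.sum hI fun j => (h.SA j k).X hI j).smul hI _).add hI (h.GA.X hI k)).add hI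
    (((h.ha.mul hI (h.hu.P k)).add hI (h.hu.mul hI (h.ha.P k))).smul hI _))).add hI
    (((h.hb.mul hI (h.hv.P k)).add hI (h.hv.mul hI (h.hb.P k))).smul hI _)

theorem PQ (h : Sys u a v b I) (ht : t ∈ I) (x : E6) (j : Fin 6) :
    P j (Q u a v b j) t x = a t x * P j (P j u) t x - u t x * P j (P j a) t x
      + (1 / 2) * (b t x * P j (P j v) t x - v t x * P j (P j b) t x) := by
  have hI := h.hI
  have su := h.hu.sm
  have sa := h.ha.sm
  have sv := h.hv.sm
  have sb := h.hb.sm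
  have pu := (h.hu.P j).sm
  have pa := (h.ha.P j).sm
  have pv := (h.hv.P j).sm
  have pb := (h.hb.P j).sm
  unfold Q
  rw [P_add hI ((sa.mul pu).add ((su.mul pa).smul _)) (((sb.mul pv).add ((sv.mul pb).smul _)).smul _) ht,
    P_add hI (sa.mul pu) ((su.mul pa).smul _) ht,
    P_smul hI _ ((sb.mul pv).add ((sv.mul pb).smul _)) ht,
    P_add hI (sb.mul pv) ((sv.mul pb).smul _) ht,
    P_smul hI _ (su.mul pa) ht, P_smul hI _ (sv.mul pb) ht,
    P_mul hI sa pu ht, P_mul hI su pa ht, P_mul hI sb pv ht, P_mul hI sv pb ht]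
  ring

theorem Tm (h : Sys u a v b I) (ht : t ∈ I) (x : E6) :
    T (u * a + v * b) t x = Complex.I * ∑ j, P j (Q u a v b j) t x := by
  have hI := h.hI
  have su := h.hu.sm
  have sa := h.ha.sm
  have sv := h.hv.sm
  have sb := h.hb.sm
  rw [T_add hI (su.mul sa) (sv.mul sb) ht, T_mul hI su sa ht, T_mul hI sv sb ht,
    h.Tu t ht, h.Ta t ht, h.Tv t ht, h.Tb t ht]
  simp only [PQ h ht]
  simp only [Finset.sum_add_distrib, Finset.sum_sub_distrib, ← Finset.mul_sum]
  simp only [Nu, Na, Nv, Nb, Pi.smul_apply, Pi.add_apply, Pi.mul_apply, Finset.sum_apply,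
    smul_eq_mul]
  ring

theorem step1 (h : Sys u a v b I) (ht : t ∈ I) (x : E6) :
    T (F0 u a v b) t x = (∑ k, P k (w1 u a v b k) t x) + F1 u a v b t x := by
  have hI := h.hI
  have sm : Sm I (u * a + v * b) := (h.hu.sm.mul h.ha.sm).add (h.hv.sm.mul h.hb.sm)
  have sQ := fun k => (h.Q2 k).sm
  have e1 : T (F0 u a v b) t x
      = ∑ k : Fin 6, (x k : ℂ) * ((x k : ℂ) * (Complex.I * ∑ j, P j (Q u a v b j) t x)) := by
    unfold F0
    rw [T_sum hI (fun k => (sm.X k).X k) ht]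
    refine Finset.sum_congr rfl fun k _ => ?_
    rw [T_X hI (sm.X k) ht, T_X hI sm ht, Tm h ht]
  have e2 : ∀ j, P j (w1 u a v b j) t x = 2 * Complex.I * ((x j : ℂ) * Q u a v b j t x)
      + ∑ k : Fin 6, (x k : ℂ) * ((x k : ℂ) * (Complex.I * P j (Q u a v b j) t x)) := by
    intro j
    unfold w1
    rw [P_smul hI _ (Sm.sum fun k => ((sQ j).X k).X k) ht,
      P_sum hI (fun k => ((sQ j).X k).X k) ht]
    simp only [fun k => P_X hI ((sQ j).X k) ht x j k, fun k => P_X hI (sQ j) ht x j k]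
    simp only [mul_add, Finset.sum_add_distrib, mul_ite, mul_zero, Finset.sum_ite_eq',
      Finset.mem_univ, if_true, X, Finset.mul_sum]
    rw [← add_assoc]
    congr 1
    · ring
    · exact Finset.sum_congr rfl fun k _ => by ring
  rw [e1]
  simp only [e2, F1, Finset.sum_apply, Pi.smul_apply, smul_eq_mul, X, Finset.sum_add_distrib,
    Finset.mul_sum]
  rw [Finset.sum_comm, add_right_comm, ← Finset.sum_add_distrib]
  rw [Finset.sum_eq_zero (f := fun i => 2 * Complex.I * ((x i : ℂ) * Q u a v b i t x) + _)
    (fun i _ => by ring), zero_add]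

theorem PS0 (hI : IsOpen I) (hu : A I u) (ha : A I a) (ht : t ∈ I) (x : E6) (j k : Fin 6) :
    P k (S0 u a j k) t x = a t x * P j (P k (P k u)) t x + u t x * P j (P k (P k a)) t x
      - P k (P k a) t x * P j u t x - P k (P k u) t x * P j a t x := by
  have su := hu.sm
  have sa := ha.sm
  have pu := fun j => (hu.P j).sm
  have pa := fun j => (ha.P j).sm
  have ppu := fun j k => ((hu.P k).P j).sm
  have ppa := fun j k => ((ha.P k).P j).sm
  unfold S0
  rw [P_add hI ((sa.mul (ppu j k)).add (su.mul (ppa j k)))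
      ((((pa k).mul (pu j)).add ((pu k).mul (pa j))).smul _) ht,
    P_add hI (sa.mul (ppu j k)) (su.mul (ppa j k)) ht,
    P_smul hI _ (((pa k).mul (pu j)).add ((pu k).mul (pa j))) ht,
    P_add hI ((pa k).mul (pu j)) ((pu k).mul (pa j)) ht,
    P_mul hI sa (ppu j k) ht, P_mul hI su (ppa j k) ht, P_mul hI (pa k) (pu j) ht,
    P_mul hI (pu k) (pa j) ht, PP_comm hI (pu k) ht x k j, PP_comm hI (pa k) ht x k j,
    PP_comm hI su ht x k j, PP_comm hI sa ht x k j]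
  ring

theorem PS (h : Sys u a v b I) (ht : t ∈ I) (x : E6) (j k : Fin 6) :
    P k (S u a v b j k) t x = P k (S0 u a j k) t x + (1 / 4) * P k (S0 v b j k) t x := by
  unfold S
  rw [P_add h.hI (S0_A h.hI h.hu h.ha j k).sm ((S0_A h.hI h.hv h.hb j k).sm.smul _) ht,
    P_smul h.hI _ (S0_A h.hI h.hv h.hb j k).sm ht]

theorem PG (h : Sys u a v b I) (ht : t ∈ I) (x : E6) (j : Fin 6) :
    P j (G u a v b) t x = P j b t x * (u t x * u t x) + 2 * (b t x * u t x * P j u t x)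
      + P j v t x * (a t x * a t x) + 2 * (v t x * a t x * P j a t x) := by
  have hI := h.hI
  have su := h.hu.sm
  have sa := h.ha.sm
  have sv := h.hv.sm
  have sb := h.hb.sm
  unfold G
  rw [P_add hI (sb.mul (su.mul su)) (sv.mul (sa.mul sa)) ht, P_mul hI sb (su.mul su) ht,
    P_mul hI sv (sa.mul sa) ht, P_mul hI su su ht, P_mul hI sa sa ht]
  simp only [Pi.mul_apply]
  ring

theorem PNu (h : Sys u a v b I) (ht : t ∈ I) (x : E6) (j : Fin 6) :
    T (P j u) t x = Complex.I * ((∑ k, P j (P k (P k u)) t x)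
      + (P j v t x * a t x + v t x * P j a t x)) := by
  have hI := h.hI
  have pp := fun k => ((h.hu.P k).P k).sm
  rw [TP_comm hI h.hu.sm ht, P_congr h.Tu j t ht x]
  unfold Nu
  rw [P_smul hI _ ((Sm.sum pp).add (h.hv.sm.mul h.ha.sm)) ht,
    P_add hI (Sm.sum pp) (h.hv.sm.mul h.ha.sm) ht, P_sum hI pp ht, P_mul hI h.hv.sm h.ha.sm ht]

theorem PNa (h : Sys u a v b I) (ht : t ∈ I) (x : E6) (j : Fin 6) :
    T (P j a) t x = -Complex.I * ((∑ k, P j (P k (P k a)) t x)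
      + (P j b t x * u t x + b t x * P j u t x)) := by
  have hI := h.hI
  have pp := fun k => ((h.ha.P k).P k).sm
  rw [TP_comm hI h.ha.sm ht, P_congr h.Ta j t ht x]
  unfold Na
  rw [P_smul hI _ ((Sm.sum pp).add (h.hb.sm.mul h.hu.sm)) ht,
    P_add hI (Sm.sum pp) (h.hb.sm.mul h.hu.sm) ht, P_sum hI pp ht, P_mul hI h.hb.sm h.hu.sm ht]

theorem PNv (h : Sys u a v b I) (ht : t ∈ I) (x : E6) (j : Fin 6) :
    T (P j v) t x = Complex.I * ((1 / 2) * (∑ k, P j (P k (P k v)) t x)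
      + (P j u t x * u t x + u t x * P j u t x)) := by
  have hI := h.hI
  have pp := fun k => ((h.hv.P k).P k).sm
  rw [TP_comm hI h.hv.sm ht, P_congr h.Tv j t ht x]
  unfold Nv
  rw [P_smul hI _ (((Sm.sum pp).smul _).add (h.hu.sm.mul h.hu.sm)) ht,
    P_add hI ((Sm.sum pp).smul _) (h.hu.sm.mul h.hu.sm) ht, P_smul hI _ (Sm.sum pp) ht,
    P_sum hI pp ht, P_mul hI h.hu.sm h.hu.sm ht]

theorem PNb (h : Sys u a v b I) (ht : t ∈ I) (x : E6) (j : Fin 6) :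
    T (P j b) t x = -Complex.I * ((1 / 2) * (∑ k, P j (P k (P k b)) t x)
      + (P j a t x * a t x + a t x * P j a t x)) := by
  have hI := h.hI
  have pp := fun k => ((h.hb.P k).P k).sm
  rw [TP_comm hI h.hb.sm ht, P_congr h.Tb j t ht x]
  unfold Nb
  rw [P_smul hI _ (((Sm.sum pp).smul _).add (h.ha.sm.mul h.ha.sm)) ht,
    P_add hI ((Sm.sum pp).smul _) (h.ha.sm.mul h.ha.sm) ht, P_smul hI _ (Sm.sum pp) ht,
    P_sum hI pp ht, P_mul hI h.ha.sm h.ha.sm ht]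

theorem TQ (h : Sys u a v b I) (ht : t ∈ I) (x : E6) (j : Fin 6) :
    T (Q u a v b j) t x = Complex.I * ((∑ k, P k (S u a v b j k) t x)
      + (1 / 2) * P j (G u a v b) t x) := by
  have hI := h.hI
  have su := h.hu.sm
  have sa := h.ha.sm
  have sv := h.hv.sm
  have sb := h.hb.sm
  have pu := (h.hu.P j).sm
  have pa := (h.ha.P j).sm
  have pv := (h.hv.P j).sm
  have pb := (h.hb.P j).sm
  unfold Q
  rw [T_add hI ((sa.mul pu).add ((su.mul pa).smul _)) (((sb.mul pv).add ((sv.mul pb).smul _)).smul _) ht,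
    T_add hI (sa.mul pu) ((su.mul pa).smul _) ht,
    T_smul hI _ ((sb.mul pv).add ((sv.mul pb).smul _)) ht,
    T_add hI (sb.mul pv) ((sv.mul pb).smul _) ht,
    T_smul hI _ (su.mul pa) ht, T_smul hI _ (sv.mul pb) ht,
    T_mul hI sa pu ht, T_mul hI su pa ht, T_mul hI sb pv ht, T_mul hI sv pb ht]
  rw [PNu h ht, PNa h ht, PNv h ht, PNb h ht,
    h.Tu t ht, h.Ta t ht, h.Tv t ht, h.Tb t ht, PG h ht]
  simp only [PS h ht, PS0 hI h.hu h.ha ht, PS0 hI h.hv h.hb ht]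
  simp only [Finset.sum_add_distrib, Finset.sum_sub_distrib, ← Finset.mul_sum, ← Finset.sum_mul]
  simp only [Nu, Na, Nv, Nb, Pi.smul_apply, Pi.add_apply, Pi.mul_apply, Finset.sum_apply,
    smul_eq_mul]
  ring

theorem step2 (h : Sys u a v b I) (ht : t ∈ I) (x : E6) :
    T (F1 u a v b) t x = (∑ k, P k (w2 u a v b k) t x) + F2 u a v b t x := by
  have hI := h.hI
  have su := h.hu.sm
  have sa := h.ha.sm
  have sv := h.hv.sm
  have sb := h.hb.sm
  have sQ := fun k => (h.Q2 k).sm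
  have e1 : T (F1 u a v b) t x
      = ∑ j : Fin 6, ((∑ k, 2 * ((x j : ℂ) * P k (S u a v b j k) t x))
        + (x j : ℂ) * P j (G u a v b) t x) := by
    unfold F1
    rw [T_sum hI (fun k => ((sQ k).X k).smul _) ht]
    refine Finset.sum_congr rfl fun k _ => ?_
    rw [T_smul hI _ ((sQ k).X k) ht, T_X hI (sQ k) ht, TQ h ht, ← Finset.mul_sum,
      ← Finset.mul_sum]
    linear_combination (-2 * (x k : ℂ) * ((∑ j, P j (S u a v b k j) t x)
      + (1 / 2) * P k (G u a v b) t x)) * Complex.I_mul_I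
  have e2 : ∀ k, P k (w2 u a v b k) t x = (∑ j : Fin 6, 2 * ((x j : ℂ) * P k (S u a v b j k) t x))
        + (x k : ℂ) * P k (G u a v b) t x - ((8 : ℂ) * (P k a t x * P k u t x)
          + 2 * (P k b t x * P k v t x) + (-1) * G u a v b t x) := by
    intro k
    have pu := (h.hu.P k).sm
    have pa := (h.ha.P k).sm
    have pv := (h.hv.P k).sm
    have pb := (h.hb.P k).sm
    have sX := fun j => (h.SA j k).sm.X j
    have s1 := (Sm.sum sX).smul 2
    have s2 := h.GA.sm.X k
    have s3 := (sa.mul pu).add (su.mul pa)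
    have s4 := (sb.mul pv).add (sv.mul pb)
    unfold w2
    rw [P_add hI ((s1.add s2).add (s3.smul _)) (s4.smul _) ht, P_add hI (s1.add s2) (s3.smul _) ht,
      P_add hI s1 s2 ht, P_smul hI _ (Sm.sum sX) ht, P_sum hI sX ht, P_smul hI _ s3 ht,
      P_smul hI _ s4 ht, P_add hI (sa.mul pu) (su.mul pa) ht,
      P_add hI (sb.mul pv) (sv.mul pb) ht, P_mul hI sa pu ht, P_mul hI su pa ht,
      P_mul hI sb pv ht, P_mul hI sv pb ht, P_X hI h.GA.sm ht]
    simp only [fun j => P_X hI (h.SA j k).sm ht x k j]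
    simp only [Finset.sum_add_distrib, Finset.sum_ite_eq', Finset.mem_univ, if_true,
      ← Finset.mul_sum]
    simp only [S, S0, Pi.smul_apply, Pi.add_apply, Pi.mul_apply, smul_eq_mul]
    ring
  rw [e1]
  simp only [e2, F2, Finset.sum_apply, Pi.smul_apply, Pi.add_apply, Pi.mul_apply, smul_eq_mul]
  rw [← Finset.sum_add_distrib]
  simp only [sub_add_cancel]
  rw [Finset.sum_add_distrib, Finset.sum_add_distrib, Finset.sum_comm]

theorem final (h : Sys u a v b I) (ht : t ∈ I) :
    HasDerivAt (fun s => ∫ x, F0 u a v b s x) (∫ x, F1 u a v b t x) t ∧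
    HasDerivAt (fun s => ∫ x, F1 u a v b s x) (∫ x, F2 u a v b t x) t := by
  constructor
  · rw [← integral_div h.hI _ h.w1A h.F1A.1 ht (step1 h ht)]
    exact h.F0A.1.hasDerivAt h.hI h.F0A.2 ht
  · rw [← integral_div h.hI _ h.w2A h.F2A ht (step2 h ht)]
    exact h.F1A.1.hasDerivAt h.hI h.F1A.2 ht

end main

theorem lap_eq (f : Fn) (t : ℝ) (x : E6) : lap (f t) x = ∑ k, P k (P k f) t x := rfl

theorem conj_lap (hI : IsOpen I) (hf : A I f) (ht : t ∈ I) (x : E6) :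
    (starRingEnd ℂ) (∑ k, P k (P k f) t x) = ∑ k, P k (P k (Cj f)) t x := by
  rw [map_sum]
  refine Finset.sum_congr rfl fun k _ => ?_
  rw [P_congr (fun t ht x => P_Cj hI hf.sm ht x k) k t ht x, P_Cj hI (hf.P k).sm ht]
  rfl

theorem sys_of_sol (hI : IsOpen I) {u v : Fn} (h : IsClassicalSol (1 / 2) I u v) :
    Sys u (Cj u) v (Cj v) I := by
  have su : Sm I u := ContDiffOn.fst h.smooth
  have sv : Sm I v := ContDiffOn.snd h.smooth
  have hu : A I u := A_of_Bd hI su fun K hK hc k n => by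
    obtain ⟨C, hC⟩ := h.bounds K hK hc k n
    exact ⟨C, fun t ht x => (hC t ht x).1⟩
  have hv : A I v := A_of_Bd hI sv fun K hK hc k n => by
    obtain ⟨C, hC⟩ := h.bounds K hK hc k n
    exact ⟨C, fun t ht x => (hC t ht x).2⟩
  have Tu : ∀ t ∈ I, ∀ x, T u t x = Nu u (Cj u) v t x := by
    intro t ht x
    have e := h.eqn_u t ht x
    rw [lap_eq] at e
    simp only [Nu, Pi.smul_apply, Pi.add_apply, Pi.mul_apply, Finset.sum_apply, smul_eq_mul, T, Cj]
    linear_combination (-Complex.I) * e + deriv (fun s => u s x) t * Complex.I_mul_I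
  have Tv : ∀ t ∈ I, ∀ x, T v t x = Nv u v t x := by
    intro t ht x
    have e := h.eqn_v t ht x
    rw [lap_eq] at e
    push_cast at e
    simp only [Nv, Pi.smul_apply, Pi.add_apply, Pi.mul_apply, Finset.sum_apply, smul_eq_mul, T]
    linear_combination (-Complex.I) * e + deriv (fun s => v s x) t * Complex.I_mul_I
  refine ⟨hI, hu, hu.Cj hI, hv, hv.Cj hI, Tu, ?_, Tv, ?_⟩
  · intro t ht x
    rw [T_Cj hI su ht]
    simp only [Cj]
    rw [Tu t ht x]
    simp only [Nu, Na, Pi.smul_apply, Pi.add_apply, Pi.mul_apply, Finset.sum_apply, smul_eq_mul]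
    rw [map_mul, map_add, conj_lap hI hu ht]
    simp [Cj]
  · intro t ht x
    rw [T_Cj hI sv ht]
    simp only [Cj]
    rw [Tv t ht x]
    simp only [Nv, Nb, Pi.smul_apply, Pi.add_apply, Pi.mul_apply, Finset.sum_apply, smul_eq_mul]
    rw [map_mul, map_add, map_mul, conj_lap hI hv ht]
    simp [Cj, Complex.conj_ofNat]

theorem F0_eq (u v : Fn) (t : ℝ) (x : E6) :
    F0 u (Cj u) v (Cj v) t x = ((‖x‖ ^ 2 * (‖u t x‖ ^ 2 + ‖v t x‖ ^ 2) : ℝ) : ℂ) := by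
  simp only [F0, X, Cj, Finset.sum_apply, Pi.add_apply, Pi.mul_apply, Complex.mul_conj',
    EuclideanSpace.real_norm_sq_eq]
  push_cast
  rw [Finset.sum_mul]
  exact Finset.sum_congr rfl fun k _ => by ring

theorem F2_int (hI : IsOpen I) {u v : Fn} (h : Sys u (Cj u) v (Cj v) I) (ht : t ∈ I) :
    (∫ x, F2 u (Cj u) v (Cj v) t x).re
      = 4 * (2 * Hen (1 / 2) (u t) (v t) - 3 * Ren (u t) (v t)) := by
  have key : ∀ {f : Fn}, A I f → ∀ x k, P k (Cj f) t x * P k f t x = ((‖pd (f t) k x‖ ^ 2 : ℝ) : ℂ) := by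
    intro f hf x k
    rw [P_Cj hI hf.sm ht]
    simp only [Cj, P, Complex.conj_mul']
    push_cast; rfl
  have gi : ∀ {f : Fn}, A I f → Integrable (fun x => gradNormSq (f t) x) := by
    intro f hf
    have h0 : Integrable (fun x => ∑ k, P k (Cj f) t x * P k f t x) :=
      (integrable_finsetSum Finset.univ fun k _ => (((hf.Cj hI).P k).mul hI (hf.P k)).integrable hI ht)
    refine h0.re.congr (Eventually.of_forall fun x => ?_)
    simp only [key hf, gradNormSq, ← Complex.ofReal_sum, RCLike.re_eq_complex_re,
      Complex.ofReal_re]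
  have gu := gi h.hu
  have gv := gi h.hv
  have gR : Integrable (fun x => (starRingEnd ℂ) (v t x) * (u t x) ^ 2) := by
    refine (((h.hv.Cj hI).mul hI (h.hu.mul hI h.hu)).integrable hI ht).congr
      (Eventually.of_forall fun x => ?_)
    simp [Cj, pow_two]
  have e : ∀ x, (F2 u (Cj u) v (Cj v) t x).re = 8 * gradNormSq (u t) x + 2 * gradNormSq (v t) x
      - 12 * ((starRingEnd ℂ) (v t x) * (u t x) ^ 2).re := by
    intro x
    simp only [F2, Finset.sum_apply, Pi.add_apply, Pi.smul_apply, Pi.mul_apply, smul_eq_mul,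
      key h.hu, key h.hv, Finset.sum_add_distrib, ← Finset.mul_sum, ← Complex.ofReal_sum]
    have hG : G u (Cj u) v (Cj v) t x = (((2 * ((starRingEnd ℂ) (v t x) * (u t x) ^ 2).re : ℝ)) : ℂ) := by
      rw [Complex.ofReal_mul, Complex.ofReal_ofNat, ← Complex.re_add_im
        ((starRingEnd ℂ) (v t x) * (u t x) ^ 2)]
      have := Complex.add_conj ((starRingEnd ℂ) (v t x) * (u t x) ^ 2)
      simp only [map_mul, map_pow, Complex.conj_conj] at this
      simp only [G, Cj, Pi.add_apply, Pi.mul_apply]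
      push_cast at this
      rw [Complex.re_add_im]
      linear_combination this
    rw [hG]
    have : (∑ _k : Fin 6, (((2 * ((starRingEnd ℂ) (v t x) * (u t x) ^ 2).re : ℝ)) : ℂ))
        = ((12 * ((starRingEnd ℂ) (v t x) * (u t x) ^ 2).re : ℝ) : ℂ) := by
      rw [Finset.sum_const, Finset.card_univ, Fintype.card_fin]
      push_cast
      rw [nsmul_eq_mul]
      push_cast
      ring
    simp only [this, ← Complex.ofReal_sum]
    have h8 : ∀ y : ℝ, ((8 : ℂ) * (y : ℂ)).re = 8 * y := fun y => by simp
    have h2 : ∀ y : ℝ, ((2 : ℂ) * (y : ℂ)).re = 2 * y := fun y => by simp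
    have hn : ∀ y : ℝ, ((-1 : ℂ) * (y : ℂ)).re = -y := fun y => by simp
    rw [Complex.add_re, Complex.add_re, h8, h2]
    first | rw [hn] | simp
    simp only [gradNormSq]
    ring
  have hre : ∀ {f : E6 → ℂ}, Integrable f → (∫ x, f x).re = ∫ x, (f x).re := fun hf => by
    exact (integral_re hf).symm
  rw [hre (h.F2A.integrable hI ht)]
  simp only [e]
  have gR' : Integrable (fun x => ((starRingEnd ℂ) (v t x) * (u t x) ^ 2).re) := gR.re
  have g82 : Integrable (fun x => 8 * gradNormSq (u t) x + 2 * gradNormSq (v t) x) :=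
    (gu.const_mul 8).add (gv.const_mul 2)
  rw [integral_sub g82 (gR'.const_mul 12),
    integral_add (gu.const_mul 8) (gv.const_mul 2), integral_const_mul, integral_const_mul,
    integral_const_mul, Hen, Ren, hre gR]
  ring

end NLSvar

/-- for a classical solution of the mass-resonance (`κ = 1/2`) quadratic NLS
system, the variance `V(t) = ∫ |x|² (|u|² + |v|²)` is twice differentiable on `I` with
`V''(t) = 4 (2H(u(t),v(t)) − 3R(u(t),v(t)))`. -/
theorem variance_second_derivative (I : Set ℝ) (hI : IsOpen I) (u v : ℝ → E6 → ℂ)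
    (hsol : IsClassicalSol (1 / 2) I u v)
    (V : ℝ → ℝ)
    (hV : ∀ t : ℝ, V t = ∫ x : E6, ‖x‖ ^ 2 * (‖u t x‖ ^ 2 + ‖v t x‖ ^ 2)) :
    ∀ t ∈ I,
      DifferentiableAt ℝ V t ∧ DifferentiableAt ℝ (deriv V) t ∧
      deriv (deriv V) t
        = 4 * (2 * Hen (1 / 2) (u t) (v t) - 3 * Ren (u t) (v t)) := by
  have hS := NLSvar.sys_of_sol hI hsol
  have hre : ∀ {F : ℝ → ℂ} {c : ℂ} {t : ℝ}, HasDerivAt F c t →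
      HasDerivAt (fun s => (F s).re) c.re t := fun h =>
    Complex.reCLM.hasFDerivAt.comp_hasDerivAt _ h
  have hV0 : V = fun s => (∫ x, NLSvar.F0 u (NLSvar.Cj u) v (NLSvar.Cj v) s x).re := by
    funext s
    simp only [NLSvar.F0_eq, hV]
    rw [integral_complex_ofReal, Complex.ofReal_re]
  have h1 : ∀ t ∈ I, HasDerivAt V
      (∫ x, NLSvar.F1 u (NLSvar.Cj u) v (NLSvar.Cj v) t x).re t := by
    intro t ht
    rw [hV0]
    exact hre (NLSvar.final hS ht).1
  intro t ht
  have h2 : HasDerivAt (deriv V)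
      (4 * (2 * Hen (1 / 2) (u t) (v t) - 3 * Ren (u t) (v t))) t := by
    rw [← NLSvar.F2_int hI hS ht]
    refine (hre (NLSvar.final hS ht).2).congr_of_eventuallyEq ?_
    filter_upwards [hI.mem_nhds ht] with s hs using (h1 s hs).deriv
  exact ⟨(h1 t ht).differentiableAt, h2.differentiableAt, h2.deriv⟩
end
end

section
/- Let κ = 1/2, let u, v : ℝ⁶ → ℂ be Schwartz functions, and let ξ ∈ ℝ⁶. Define the Galilean transforms u^ξ(x) = e^{i x·ξ} u(x) and v^ξ(x) = e^{2i x·ξ} v(x). Then H(u^ξ, v^ξ) − H(u, v) = |ξ|²·M(u, v) + 2 ξ·P(u, v), where H(u,v) = ∫|∇u|² + (1/4)∫|∇v|², M(u,v) = ∫|u|² + ∫|v|², and P(u,v) = Im ∫ (conj(u)∇u + (1/2)conj(v)∇v) dx. -/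
open MeasureTheory Real Filter

noncomputable section

theorem aux_memLp (f : E6 → ℂ) (hf : IsSchwartz f) :
    MemLp f 2 volume ∧ (∀ j, MemLp (pd f j) 2 volume) ∧ Differentiable ℝ f := by
  obtain ⟨h1, h2⟩ := hf
  let F : SchwartzMap E6 ℂ := ⟨f, h1, h2⟩
  refine ⟨F.memLp 2 volume, fun j => ?_, F.differentiable⟩
  have h3 : MemLp (fun x => fderiv ℝ f x) 2 volume :=
    (SchwartzMap.fderivCLM ℝ E6 ℂ F).memLp 2 volume
  exact ContinuousLinearMap.comp_memLp'
    (ContinuousLinearMap.apply ℝ ℂ (EuclideanSpace.single j (1:ℝ) : E6)) h3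

theorem aux_cross (f : E6 → ℂ) (hf : IsSchwartz f) (j : Fin 6) :
    Integrable (fun x => (starRingEnd ℂ) (f x) * pd f j x) volume := by
  obtain ⟨h1, h2, -⟩ := aux_memLp f hf
  exact MemLp.integrable_mul (p := 2) (q := 2) h1.star (h2 j)

theorem aux_pd (f : E6 → ℂ) (hf : Differentiable ℝ f) (ξ : E6) (c : ℝ) (j : Fin 6) (x : E6) :
    pd (fun x => Complex.exp (c * Complex.I * ((∑ j : Fin 6, x j * ξ j : ℝ) : ℂ)) * f x) j x
     = Complex.exp (c * Complex.I * ((∑ j : Fin 6, x j * ξ j : ℝ) : ℂ)) *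
        (pd f j x + c * Complex.I * ξ j * f x) := by
  let L : E6 →L[ℝ] ℝ := ∑ j : Fin 6, (ξ j) • (EuclideanSpace.proj j : E6 →L[ℝ] ℝ)
  have hL : ∀ x : E6, (∑ j : Fin 6, x j * ξ j) = L x := by
    intro x
    simp [L, mul_comm]
  have hLj : L (EuclideanSpace.single j 1) = ξ j := by
    simp [L]
  simp only [hL]
  have h0 : HasFDerivAt (fun x : E6 => ((L x : ℝ) : ℂ)) (Complex.ofRealCLM.comp L) x :=
    (Complex.ofRealCLM.comp L).hasFDerivAt
  have h1 := ((h0.const_mul (c * Complex.I)).cexp).mul (hf x).hasFDerivAt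
  unfold pd
  erw [h1.fderiv]
  simp [hLj]
  ring

theorem aux_norm (e a b : ℂ) (t : ℝ) (he : ‖e‖ = 1) :
    ‖e * (a + t * Complex.I * b)‖ ^ 2 =
      ‖a‖ ^ 2 + t ^ 2 * ‖b‖ ^ 2 + 2 * t * ((starRingEnd ℂ) b * a).im := by
  rw [norm_mul, he, one_mul, ← Complex.normSq_eq_norm_sq, ← Complex.normSq_eq_norm_sq,
    ← Complex.normSq_eq_norm_sq]
  simp [Complex.normSq_apply]
  ring

theorem aux_main (f : E6 → ℂ) (hf : IsSchwartz f) (ξ : E6) (c : ℝ) :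
    ∫ x : E6, gradNormSq
      (fun x => Complex.exp (c * Complex.I * ((∑ j : Fin 6, x j * ξ j : ℝ) : ℂ)) * f x) x
    = (∫ x : E6, gradNormSq f x) + c ^ 2 * ‖ξ‖ ^ 2 * (∫ x : E6, ‖f x‖ ^ 2)
      + 2 * c * ∑ j : Fin 6, ξ j * (∫ x : E6, (starRingEnd ℂ) (f x) * pd f j x).im := by
  obtain ⟨h1, h2, h3⟩ := aux_memLp f hf
  have hm : Integrable (fun x => ‖f x‖ ^ 2) volume := h1.integrable_norm_pow (by norm_num)
  have hd : ∀ j, Integrable (fun x => ‖pd f j x‖ ^ 2) volume :=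
    fun j => (h2 j).integrable_norm_pow (by norm_num)
  have hc : ∀ j, Integrable (fun x => ((starRingEnd ℂ) (f x) * pd f j x).im) volume :=
    fun j => (aux_cross f hf j).im
  have him : ∀ j, (∫ x : E6, (starRingEnd ℂ) (f x) * pd f j x).im
      = ∫ x : E6, ((starRingEnd ℂ) (f x) * pd f j x).im :=
    fun j => (integral_im (aux_cross f hf j)).symm
  have hg : Integrable (fun x => gradNormSq f x) volume := by
    unfold gradNormSq
    exact integrable_finsetSum _ (fun j _ => hd j)
  have key : ∀ x : E6, gradNormSq
      (fun x => Complex.exp (c * Complex.I * ((∑ j : Fin 6, x j * ξ j : ℝ) : ℂ)) * f x) x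
      = gradNormSq f x + c ^ 2 * ‖ξ‖ ^ 2 * ‖f x‖ ^ 2
        + ∑ j : Fin 6, 2 * c * ξ j * ((starRingEnd ℂ) (f x) * pd f j x).im := by
    intro x
    unfold gradNormSq
    rw [EuclideanSpace.norm_sq_eq, Finset.mul_sum, Finset.sum_mul, ← Finset.sum_add_distrib,
      ← Finset.sum_add_distrib]
    refine Finset.sum_congr rfl fun j _ => ?_
    rw [aux_pd f h3]
    have := aux_norm (Complex.exp (c * Complex.I * ((∑ j : Fin 6, x j * ξ j : ℝ) : ℂ)))
      (pd f j x) (f x) (c * ξ j) (by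
        rw [Complex.norm_exp]
        simp)
    rw [Real.norm_eq_abs, sq_abs]
    rw [← mul_pow, mul_assoc 2 c (ξ j), ← this]
    congr 4
    push_cast
    ring
  have hgm : Integrable (fun x => gradNormSq f x + c ^ 2 * ‖ξ‖ ^ 2 * ‖f x‖ ^ 2) volume :=
    hg.add (hm.const_mul _)
  simp only [key]
  rw [integral_add hgm
    (integrable_finsetSum _ (fun j _ => (hc j).const_mul _)),
    integral_add hg (hm.const_mul _), integral_const_mul,
    integral_finsetSum _ (fun j _ => (hc j).const_mul _)]
  simp only [integral_const_mul, him, Finset.mul_sum, mul_assoc]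

/-- Galilean transform identity in the mass-resonance case `κ = 1/2`.
For Schwartz `u, v` and `ξ ∈ ℝ⁶`, with `u^ξ(x) = e^{i x·ξ} u(x)` and
`v^ξ(x) = e^{2i x·ξ} v(x)`, one has
`H(u^ξ, v^ξ) − H(u,v) = |ξ|² M(u,v) + 2 ξ·P(u,v)`. -/
theorem galilean_kinetic_identity (u v : E6 → ℂ) (hu : IsSchwartz u) (hv : IsSchwartz v)
    (ξ : E6) :
    Hen (1 / 2)
        (fun x => Complex.exp (Complex.I * ((∑ j : Fin 6, x j * ξ j : ℝ) : ℂ)) * u x)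
        (fun x => Complex.exp (2 * Complex.I * ((∑ j : Fin 6, x j * ξ j : ℝ) : ℂ)) * v x)
      - Hen (1 / 2) u v
      = ‖ξ‖ ^ 2 * Mass u v + 2 * ∑ j : Fin 6, ξ j * Pmom u v j := by
  have hU := aux_main u hu ξ 1
  have hV := aux_main v hv ξ 2
  simp only [Complex.ofReal_one, one_mul, Complex.ofReal_ofNat] at hU hV
  have hP : ∀ j, Pmom u v j = (∫ x : E6, (starRingEnd ℂ) (u x) * pd u j x).im
      + 1 / 2 * (∫ x : E6, (starRingEnd ℂ) (v x) * pd v j x).im := by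
    intro j
    unfold Pmom
    simp only [mul_assoc (1 / 2 : ℂ)]
    rw [integral_add (aux_cross u hu j) ((aux_cross v hv j).const_mul _), integral_const_mul,
      Complex.add_im]
    congr 1
    rw [show (1 / 2 : ℂ) = ((1 / 2 : ℝ) : ℂ) by push_cast; rfl, Complex.im_ofReal_mul]
  unfold Hen Mass
  rw [hU, hV]
  simp only [hP, mul_add, Finset.sum_add_distrib]
  have : ∑ j : Fin 6, ξ j * (1 / 2 * (∫ x : E6, (starRingEnd ℂ) (v x) * pd v j x).im)
      = 1 / 2 * ∑ j : Fin 6, ξ j * (∫ x : E6, (starRingEnd ℂ) (v x) * pd v j x).im := by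
    rw [Finset.mul_sum]
    exact Finset.sum_congr rfl fun j _ => by ring
  rw [this]
  ring
end
end
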